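/- arXiv:1910.09035 — 3 statements merged into one kernel-verified Lean document; each statement's English description precedes it below -/
import Mathlib

section
/- There exists a universal constant C > 0 (independent of the dimension d) with the following property: for every d ≥ 1, every centered, isotropic, log-concave probability measure μ on ℝ^d, and every Brenier map T sending the standard Gaussian measure γ onto μ, one has |T(x)| ≤ C(d + |x|²) for every x ∈ ℝ^d. -/
open MeasureTheory Real
open scoped RealInnerProductSpace ENNReal

noncomputable section

/-- The standard Gaussian measure `γ` on `ℝ^d`, with density
`(2π)^{-d/2} e^{-|x|²/2}` with respect to Lebesgue measure. -/
def stdGaussian (d : ℕ) : Measure (EuclideanSpace ℝ (Fin d)) :=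
  volume.withDensity fun x =>
    ENNReal.ofReal ((2 * π) ^ (-(d : ℝ) / 2) * Real.exp (-‖x‖ ^ 2 / 2))

/-- A probability measure on `ℝ^d` is centered if `∫ x dμ(x) = 0`. -/
def IsCentered {d : ℕ} (μ : Measure (EuclideanSpace ℝ (Fin d))) : Prop :=
  ∫ x, x ∂μ = 0

/-- A probability measure on `ℝ^d` is isotropic if `∫ xᵢ xⱼ dμ(x) = δᵢⱼ`. -/
def IsIsotropic {d : ℕ} (μ : Measure (EuclideanSpace ℝ (Fin d))) : Prop :=
  ∀ i j : Fin d, ∫ x, x i * x j ∂μ = if i = j then 1 else 0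

/-- A measure on `ℝ^d` is log-concave if `μ = e^{-V(x)} dx` for some convex `V`. -/
def IsLogConcave {d : ℕ} (μ : Measure (EuclideanSpace ℝ (Fin d))) : Prop :=
  ∃ V : EuclideanSpace ℝ (Fin d) → ℝ, ConvexOn ℝ Set.univ V ∧
    μ = volume.withDensity fun x => ENNReal.ofReal (Real.exp (-V x))

/-- `T = ∇φ` is a Brenier map sending the standard Gaussian onto `μ` if `φ` is convex,
differentiable, and the pushforward of `γ` under `∇φ` is `μ`. -/
def IsBrenierPotential {d : ℕ} (φ : EuclideanSpace ℝ (Fin d) → ℝ)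
    (μ : Measure (EuclideanSpace ℝ (Fin d))) : Prop :=
  ConvexOn ℝ Set.univ φ ∧ Differentiable ℝ φ ∧
    Measure.map (gradient φ) (stdGaussian d) = μ


abbrev EE (d : ℕ) := EuclideanSpace ℝ (Fin d)

theorem grad_ineq {d : ℕ} {φ : EE d → ℝ} (hc : ConvexOn ℝ Set.univ φ) (hd : Differentiable ℝ φ)
    (x y : EE d) : φ x + ⟪gradient φ x, y - x⟫ ≤ φ y := by
  have h1 : ConvexOn ℝ Set.univ (φ ∘ AffineMap.lineMap (k := ℝ) x y) := by
    simpa using hc.comp_affineMap (AffineMap.lineMap (k := ℝ) x y)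
  have h2 : HasDerivAt (φ ∘ AffineMap.lineMap (k := ℝ) x y) ⟪gradient φ x, y - x⟫ 0 := by
    have h3 : HasFDerivAt φ (fderiv ℝ φ x) (AffineMap.lineMap (k := ℝ) x y 0) := by
      simpa using (hd x).hasFDerivAt
    have h4 : HasDerivAt (AffineMap.lineMap (k := ℝ) x y) (y - x) 0 := AffineMap.hasDerivAt_lineMap
    have := h3.comp_hasDerivAt (0 : ℝ) h4
    rwa [← toDual_gradient, InnerProductSpace.toDual_apply_apply] at this
  have := h1.le_slope_of_hasDerivAt (Set.mem_univ 0) (Set.mem_univ 1) zero_lt_one h2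
  simp only [slope_def_field, Function.comp_apply, AffineMap.lineMap_apply_zero,
    AffineMap.lineMap_apply_one, sub_zero, div_one] at this
  linarith

theorem grad_mono {d : ℕ} {φ : EE d → ℝ} (hc : ConvexOn ℝ Set.univ φ) (hd : Differentiable ℝ φ)
    (x y : EE d) : ⟪gradient φ x, y - x⟫ ≤ ⟪gradient φ y, y - x⟫ := by
  have h1 := grad_ineq hc hd x y
  have h2 := grad_ineq hc hd y x
  rw [← neg_sub, inner_neg_right] at h2
  linarith

theorem lintegral_affine {d : ℕ} (a : EE d) {s : ℝ} (hs : 0 < s) {g : EE d → ℝ≥0∞}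
    (hg : Measurable g) :
    ∫⁻ z, g (a + s • z) = ENNReal.ofReal ((s ^ d)⁻¹) * ∫⁻ w, g w := by
  have h1 : ∫⁻ z, g (a + s • z) = ∫⁻ w, g (a + w) ∂(Measure.map (s • ·) (volume : Measure (EE d))) := by
    rw [lintegral_map (by fun_prop) (by fun_prop)]
  rw [h1, Measure.map_addHaar_smul _ hs.ne', lintegral_smul_measure, lintegral_add_left_eq_self,
    finrank_euclideanSpace_fin, abs_of_pos (by positivity)]
  simp

/-- `f^{1/2}` is integrable and bounds `f`: there is `L` with `V ≥ -L` and `e^{L/2} ∫ e^{-V/2} ≤ 2^d`. -/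
theorem exists_L {d : ℕ} {V : EE d → ℝ} (hV : ConvexOn ℝ Set.univ V) (hm : Continuous V)
    (h1 : ∫⁻ x, ENNReal.ofReal (Real.exp (-V x)) = 1) :
    ∃ L : ℝ, (∀ x, -L ≤ V x) ∧
      ENNReal.ofReal (Real.exp (L / 2)) * ∫⁻ x, ENNReal.ofReal (Real.exp (-V x / 2))
        ≤ ENNReal.ofReal (2 ^ d) := by
  set I := ∫⁻ x, ENNReal.ofReal (Real.exp (-V x / 2)) with hI
  have key : ∀ y, ENNReal.ofReal (Real.exp (-V y / 2)) * I ≤ ENNReal.ofReal (2 ^ d) := by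
    intro y
    have h2 := lintegral_affine ((1/2 : ℝ) • y) (s := 1/2) (by norm_num)
      (g := fun x => ENNReal.ofReal (Real.exp (-V x))) (by fun_prop)
    rw [h1, mul_one] at h2
    have h3 : (((1/2 : ℝ) ^ d)⁻¹) = 2 ^ d := by
      rw [← inv_pow]; norm_num
    rw [h3] at h2
    rw [← h2, hI, ← lintegral_const_mul _ (by fun_prop)]
    refine lintegral_mono fun z => ?_
    rw [← ENNReal.ofReal_mul (Real.exp_pos _).le, ← Real.exp_add]
    refine ENNReal.ofReal_le_ofReal (Real.exp_le_exp.2 ?_)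
    have := hV.2 (Set.mem_univ y) (Set.mem_univ z) (show (0 : ℝ) ≤ 1/2 by norm_num)
      (show (0 : ℝ) ≤ 1/2 by norm_num) (by norm_num)
    simp only [smul_eq_mul] at this
    linarith
  have hIpos : I ≠ 0 := by
    intro h0
    rw [hI, lintegral_eq_zero_iff (by fun_prop)] at h0
    have : (fun x : EE d => ENNReal.ofReal (Real.exp (-V x))) =ᵐ[volume] 0 := by
      filter_upwards [h0] with x hx
      simp at hx
      exact absurd hx (not_le.2 (Real.exp_pos _))
    rw [lintegral_congr_ae this] at h1
    simp at h1
  have hItop : I ≠ ⊤ := by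
    intro h0
    have := key 0
    rw [h0, ENNReal.mul_top (by simp [Real.exp_pos])] at this
    simp at this
  have hIr : 0 < I.toReal := ENNReal.toReal_pos hIpos hItop
  have hIo : ENNReal.ofReal I.toReal = I := ENNReal.ofReal_toReal hItop
  refine ⟨2 * Real.log (2 ^ d / I.toReal), fun y => ?_, ?_⟩
  · have := key y
    rw [← hIo, ← ENNReal.ofReal_mul (Real.exp_pos _).le,
      ENNReal.ofReal_le_ofReal_iff (by positivity), ← le_div_iff₀ hIr] at this
    have := Real.log_le_log (Real.exp_pos _) this
    rw [Real.log_exp] at this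
    linarith
  · rw [mul_div_cancel_left₀ _ (by norm_num), Real.exp_log (by positivity)]
    rw [← hIo, ← ENNReal.ofReal_mul (by positivity)]
    refine ENNReal.ofReal_le_ofReal ?_
    rw [hIo, div_mul_cancel₀ _ hIr.ne']

theorem second_moment {d : ℕ} {μ : Measure (EE d)} [IsProbabilityMeasure μ] (hi : IsIsotropic μ)
    (u : EE d) (hu : ‖u‖ = 1) :
    Integrable (fun z => ⟪z, u⟫ ^ 2) μ ∧ ∫ z, ⟪z, u⟫ ^ 2 ∂μ = 1 := by
  have hsq : ∀ i, Integrable (fun z : EE d => z i * z i) μ := by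
    intro i
    by_contra h
    have := hi i i
    rw [integral_undef h] at this
    simp at this
  have hij : ∀ i j, Integrable (fun z : EE d => z i * z j) μ := by
    intro i j
    refine ((hsq i).add (hsq j)).mono' (by fun_prop) (Filter.Eventually.of_forall fun z => ?_)
    simp only [Pi.add_apply, Real.norm_eq_abs]
    rw [abs_le]
    constructor <;> nlinarith [sq_nonneg (z i + z j), sq_nonneg (z i - z j), sq_nonneg (z i), sq_nonneg (z j)]
  have he : (fun z : EE d => ⟪z, u⟫ ^ 2) = fun z => ∑ i, ∑ j, (u i * u j) * (z i * z j) := by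
    funext z
    rw [sq, PiLp.inner_apply, Finset.sum_mul_sum]
    refine Finset.sum_congr rfl fun i _ => Finset.sum_congr rfl fun j _ => ?_
    simp
    ring
  have hint : ∀ i j, Integrable (fun z : EE d => (u i * u j) * (z i * z j)) μ :=
    fun i j => (hij i j).const_mul _
  rw [he]
  refine ⟨integrable_finsetSum _ fun i _ => integrable_finsetSum _ fun j _ => hint i j, ?_⟩
  rw [integral_finsetSum _ fun i _ => integrable_finsetSum _ fun j _ => hint i j]
  simp_rw [integral_finsetSum _ fun j _ => hint _ j, integral_const_mul, hi _ _]
  have : ∑ i, u i * u i = 1 := by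
    have h := EuclideanSpace.real_norm_sq_eq u
    rw [hu] at h
    simp only [sq] at h
    linarith
  simpa using this

theorem cheb {d : ℕ} {μ : Measure (EE d)} [IsProbabilityMeasure μ] (hi : IsIsotropic μ)
    (u : EE d) (hu : ‖u‖ = 1) : μ.real {z | 2 ≤ ⟪z, u⟫} ≤ 1 / 4 ∧ 3 / 4 ≤ μ.real {z | -2 ≤ ⟪z, u⟫} := by
  obtain ⟨h1, h2⟩ := second_moment hi u hu
  have h3 := mul_meas_ge_le_integral_of_nonneg (Filter.Eventually.of_forall fun z => sq_nonneg _) h1 4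
  rw [h2] at h3
  have h4 : μ.real {z | 4 ≤ ⟪z, u⟫ ^ 2} ≤ 1 / 4 := by linarith
  constructor
  · refine le_trans (measureReal_mono ?_) h4
    intro z hz
    simp only [Set.mem_ofPred_eq] at hz ⊢
    nlinarith
  · have hm : MeasurableSet {z : EE d | -2 ≤ ⟪z, u⟫} := measurableSet_le (by fun_prop) (by fun_prop)
    have h5 := probReal_compl_eq_one_sub (μ := μ) hm
    have : μ.real {z : EE d | -2 ≤ ⟪z, u⟫}ᶜ ≤ 1 / 4 := by
      refine le_trans (measureReal_mono ?_) h4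
      intro z hz
      simp only [Set.mem_ofPred_eq, Set.mem_compl_iff, not_le] at hz ⊢
      nlinarith
    linarith

theorem pointwise {d : ℕ} (hd : 1 ≤ d) {μ : Measure (EE d)} [IsProbabilityMeasure μ]
    (hi : IsIsotropic μ) {V : EE d → ℝ} (hV : ConvexOn ℝ Set.univ V) (hm : Continuous V)
    (hμ : μ = volume.withDensity fun x => ENNReal.ofReal (Real.exp (-V x)))
    {L : ℝ} (hL : ∀ x, -L ≤ V x) (y : EE d) : ‖y‖ / 4 - 2 * d ≤ V y + L := by
  have hd' : (1 : ℝ) ≤ d := by exact_mod_cast hd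
  rcases lt_or_ge ‖y‖ 8 with ht | ht
  · have := hL y
    linarith
  set t := ‖y‖ with htdef
  have ht0 : 0 < t := by linarith
  set u : EE d := t⁻¹ • y with hu
  have hu1 : ‖u‖ = 1 := by
    rw [hu, norm_smul, ← htdef, norm_inv, Real.norm_of_nonneg ht0.le, inv_mul_cancel₀ ht0.ne']
  have hyu : ⟪y, u⟫ = t := by
    rw [hu, inner_smul_right, real_inner_self_eq_norm_sq, ← htdef]
    field_simp
  obtain ⟨hB, hA⟩ := cheb hi u hu1
  set l : ℝ := 4 / t with hl
  have hl0 : 0 < l := by positivity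
  have hl2 : l ≤ 1 / 2 := by
    rw [hl, div_le_iff₀ ht0]; linarith
  have hlt : l * t = 4 := by rw [hl]; field_simp
  set B : Set (EE d) := {z | 2 ≤ ⟪z, u⟫} with hBdef
  set A : Set (EE d) := {z | -2 ≤ ⟪z, u⟫} with hAdef
  have hBm : MeasurableSet B := measurableSet_le (by fun_prop) (by fun_prop)
  have hAm : MeasurableSet A := measurableSet_le (by fun_prop) (by fun_prop)
  have hfm : Measurable fun x : EE d => ENNReal.ofReal (Real.exp (-V x)) := by fun_prop
  have h1 := lintegral_affine (l • y) (s := 1 - l) (by linarith) (hfm.indicator hBm)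
  rw [lintegral_indicator hBm, ← withDensity_apply _ hBm, ← hμ] at h1
  have h2 : ENNReal.ofReal (Real.exp (-l * (V y + L))) * μ A ≤
      ENNReal.ofReal (((1 - l) ^ d)⁻¹) * μ B := by
    rw [← h1]
    have : μ A = ∫⁻ z, A.indicator (fun x => ENNReal.ofReal (Real.exp (-V x))) z := by
      rw [lintegral_indicator hAm, ← withDensity_apply _ hAm, ← hμ]
    rw [this, ← lintegral_const_mul _ (hfm.indicator hAm)]
    refine lintegral_mono fun z => ?_
    by_cases hz : z ∈ A
    · have hz' : l • y + (1 - l) • z ∈ B := by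
        simp only [hBdef, hAdef, Set.mem_ofPred_eq] at hz ⊢
        rw [inner_add_left, inner_smul_left, inner_smul_left, hyu]
        simp only [conj_trivial, hlt]
        nlinarith
      simp only [Set.indicator_of_mem hz, Set.indicator_of_mem hz']
      rw [← ENNReal.ofReal_mul (Real.exp_pos _).le, ← Real.exp_add]
      refine ENNReal.ofReal_le_ofReal (Real.exp_le_exp.2 ?_)
      have h3 := hV.2 (Set.mem_univ y) (Set.mem_univ z) hl0.le (show 0 ≤ 1 - l by linarith)
        (by ring)
      simp only [smul_eq_mul] at h3
      nlinarith [hL z]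
    · simp [Set.indicator_of_notMem hz]
  have hlp : 0 < (1 - l) ^ d := pow_pos (by linarith) d
  have h3 : Real.exp (-l * (V y + L)) * μ.real A ≤ ((1 - l) ^ d)⁻¹ * μ.real B := by
    have := ENNReal.toReal_mono (ENNReal.mul_ne_top ENNReal.ofReal_ne_top (measure_ne_top _ _)) h2
    rwa [ENNReal.toReal_mul, ENNReal.toReal_mul, ENNReal.toReal_ofReal (Real.exp_pos _).le,
      ENNReal.toReal_ofReal (by positivity)] at this
  have h4 : Real.exp (-2 * l) ≤ 1 - l := by
    have := Real.one_sub_inv_le_log_of_pos (show 0 < 1 - l by linarith)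
    rw [← Real.le_log_iff_exp_le (by linarith)]
    refine le_trans ?_ this
    have : (1 - l)⁻¹ ≤ 1 + 2 * l := by
      rw [inv_le_iff_one_le_mul₀ (by linarith)]
      nlinarith
    linarith
  have h5 : Real.exp (-2 * l * d) ≤ (1 - l) ^ d := by
    have := pow_le_pow_left₀ (Real.exp_pos _).le h4 d
    rwa [← Real.exp_nat_mul, mul_comm (d : ℝ)] at this
  have h6 : Real.exp (-l * (V y + L)) * (3 / 4) ≤ Real.exp (2 * l * d) * (1 / 4) := by
    calc _ ≤ Real.exp (-l * (V y + L)) * μ.real A := by gcongr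
      _ ≤ _ := h3
      _ ≤ _ := by
        gcongr
        rw [inv_le_comm₀ hlp (Real.exp_pos _), ← Real.exp_neg]
        rwa [show -(2 * l * (d : ℝ)) = -2 * l * d by ring]
  have h7 : Real.exp (-l * (V y + L) + 1) ≤ Real.exp (2 * l * d) := by
    rw [Real.exp_add]
    have := Real.exp_one_lt_d9
    nlinarith [Real.exp_pos (-l * (V y + L))]
  have h8 := Real.exp_le_exp.1 h7
  have h9 : 0 ≤ t * (l * (V y + L) - 1 + 2 * l * d) := mul_nonneg ht0.le (by linarith)
  have h10 : t * (l * (V y + L) - 1 + 2 * l * d) = 4 * (V y + L) - t + 8 * d := by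
    linear_combination (V y + L + 2 * d) * hlt
  linarith

theorem tail_bound {d : ℕ} (hd : 1 ≤ d) {μ : Measure (EE d)} [IsProbabilityMeasure μ]
    (hi : IsIsotropic μ) (hlc : IsLogConcave μ) (s : ℝ) :
    μ {y | s ≤ ‖y‖} ≤ ENNReal.ofReal (Real.exp (2 * d - s / 8)) := by
  obtain ⟨V, hV, hμ⟩ := hlc
  have hm : Continuous V := continuousOn_univ.1 (hV.continuousOn isOpen_univ)
  have h1 : ∫⁻ x, ENNReal.ofReal (Real.exp (-V x)) = 1 := by
    rw [← setLIntegral_univ, ← withDensity_apply _ MeasurableSet.univ, ← hμ, measure_univ]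
  obtain ⟨L, hL, hI⟩ := exists_L hV hm h1
  have hp := pointwise hd hi hV hm hμ hL
  have hS : MeasurableSet {y : EE d | s ≤ ‖y‖} := measurableSet_le (by fun_prop) (by fun_prop)
  rw [hμ, withDensity_apply _ hS]
  calc _ ≤ ∫⁻ y in {y : EE d | s ≤ ‖y‖}, ENNReal.ofReal (Real.exp (d - s / 8 + L / 2)) *
            ENNReal.ofReal (Real.exp (-V y / 2)) := by
        refine setLIntegral_mono (by fun_prop) fun y hy => ?_
        rw [← ENNReal.ofReal_mul (Real.exp_pos _).le, ← Real.exp_add]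
        refine ENNReal.ofReal_le_ofReal (Real.exp_le_exp.2 ?_)
        have := hp y
        simp only [Set.mem_ofPred_eq] at hy
        linarith
    _ ≤ ∫⁻ y, ENNReal.ofReal (Real.exp (d - s / 8 + L / 2)) *
            ENNReal.ofReal (Real.exp (-V y / 2)) := setLIntegral_le_lintegral _ _
    _ = ENNReal.ofReal (Real.exp (d - s / 8)) * (ENNReal.ofReal (Real.exp (L / 2)) *
          ∫⁻ y, ENNReal.ofReal (Real.exp (-V y / 2))) := by
        rw [lintegral_const_mul _ (by fun_prop), Real.exp_add,
          ENNReal.ofReal_mul (Real.exp_pos _).le, mul_assoc]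
    _ ≤ ENNReal.ofReal (Real.exp (d - s / 8)) * ENNReal.ofReal (2 ^ d) := by gcongr
    _ ≤ _ := by
        rw [← ENNReal.ofReal_mul (Real.exp_pos _).le]
        refine ENNReal.ofReal_le_ofReal ?_
        have h2 : (2 : ℝ) ^ d ≤ Real.exp d := by
          have := pow_le_pow_left₀ (by norm_num)
            (show (2 : ℝ) ≤ Real.exp 1 by linarith [Real.exp_one_gt_d9]) d
          rwa [← Real.exp_nat_mul, mul_one] at this
        calc _ ≤ Real.exp (d - s / 8) * Real.exp d := by gcongr
          _ = _ := by rw [← Real.exp_add]; ring_nf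

theorem cube_volume {d : ℕ} (c : EE d) :
    MeasurableSet {x : EE d | ∀ i, |x i - c i| < 1} ∧
    volume {x : EE d | ∀ i, |x i - c i| < 1} = ENNReal.ofReal (2 ^ d) := by
  have hm : MeasurableSet {x : EE d | ∀ i, |x i - c i| < 1} := by
    have : {x : EE d | ∀ i, |x i - c i| < 1} = ⋂ i, {x : EE d | |x i - c i| < 1} := by
      ext; simp
    rw [this]
    exact MeasurableSet.iInter fun i => measurableSet_lt (by fun_prop) (by fun_prop)
  refine ⟨hm, ?_⟩
  rw [← (PiLp.volume_preserving_toLp (Fin d)).measure_preimage hm.nullMeasurableSet]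
  have : (WithLp.toLp 2 ⁻¹' {x : EE d | ∀ i, |x i - c i| < 1} : Set (Fin d → ℝ)) =
      Set.pi Set.univ fun i => Set.Ioo (c i - 1) (c i + 1) := by
    ext x
    simp only [Set.mem_preimage, Set.mem_ofPred_eq, Set.mem_pi, Set.mem_univ, true_imp_iff,
      Set.mem_Ioo, abs_lt]
    refine forall_congr' fun i => ?_
    constructor <;> rintro ⟨h1, h2⟩ <;> constructor <;> linarith
  rw [this, Real.volume_pi_Ioo]
  have h2 : ∀ i, c i + 1 - (c i - 1) = 2 := fun i => by ring
  simp [h2, ENNReal.ofReal_pow]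

theorem cube_norm {d : ℕ} {c x : EE d} (h : ∀ i, |x i - c i| < 1) : ‖x - c‖ ≤ √d := by
  rw [EuclideanSpace.norm_eq]
  refine Real.sqrt_le_sqrt ?_
  calc _ ≤ ∑ i : Fin d, (1 : ℝ) := by
        refine Finset.sum_le_sum fun i _ => ?_
        have := (h i).le
        rw [PiLp.sub_apply, Real.norm_eq_abs]
        exact pow_le_one₀ (abs_nonneg _) this
    _ = _ := by simp

theorem gauss_lower {d : ℕ} (c : EE d) {R : ℝ} (hR : ∀ x : EE d, (∀ i, |x i - c i| < 1) → ‖x‖ ≤ R) :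
    ENNReal.ofReal (Real.exp (-d - R ^ 2 / 2)) ≤ stdGaussian d {x | ∀ i, |x i - c i| < 1} := by
  obtain ⟨hm, hv⟩ := cube_volume c
  rw [stdGaussian, withDensity_apply _ hm]
  have hpos : 0 < (2 * π) ^ (-(d : ℝ) / 2) := by positivity
  calc _ ≤ ENNReal.ofReal ((2 * π) ^ (-(d : ℝ) / 2) * Real.exp (-R ^ 2 / 2)) *
        ENNReal.ofReal (2 ^ d) := by
        rw [← ENNReal.ofReal_mul (by positivity)]
        refine ENNReal.ofReal_le_ofReal ?_
        have h1 : Real.exp (-d) ≤ (2 * π) ^ (-(d : ℝ) / 2) * 2 ^ d := by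
          have e1 : (2 * π) ^ (-(d : ℝ) / 2) = ((√(2 * π)) ^ d)⁻¹ := by
            rw [neg_div, Real.rpow_neg (by positivity), Real.sqrt_eq_rpow, ← Real.rpow_natCast,
              ← Real.rpow_mul (by positivity)]
            congr 2; ring
          have e2 : Real.exp (-d) = ((Real.exp 1) ^ d)⁻¹ := by
            rw [← Real.exp_nat_mul, mul_one, Real.exp_neg]
          rw [e1, e2, inv_mul_eq_div, inv_le_iff_one_le_mul₀ (by positivity), div_mul_eq_mul_div,
            one_le_div (by positivity), ← mul_pow]
          refine pow_le_pow_left₀ (by positivity) ?_ d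
          rw [Real.sqrt_le_left (by positivity)]
          nlinarith [Real.exp_one_gt_d9, Real.pi_lt_four]
        calc _ = Real.exp (-d) * Real.exp (-R ^ 2 / 2) := by rw [← Real.exp_add]; ring_nf
          _ ≤ ((2 * π) ^ (-(d : ℝ) / 2) * 2 ^ d) * Real.exp (-R ^ 2 / 2) := by gcongr
          _ = _ := by ring
    _ = ∫⁻ x in {x : EE d | ∀ i, |x i - c i| < 1},
          ENNReal.ofReal ((2 * π) ^ (-(d : ℝ) / 2) * Real.exp (-R ^ 2 / 2)) := by
        rw [setLIntegral_const, hv]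
    _ ≤ _ := by
        refine setLIntegral_mono (by fun_prop) fun x hx => ?_
        refine ENNReal.ofReal_le_ofReal ?_
        have := hR x hx
        gcongr

/-- There exists a universal constant `C > 0` such that for every `d ≥ 1`, every centered,
isotropic, log-concave probability measure `μ` on `ℝ^d`, and every Brenier map `T = ∇φ`
sending the standard Gaussian onto `μ`, one has `|T(x)| ≤ C (d + |x|²)` for all `x`. -/
theorem statement_0 :
    ∃ C : ℝ, 0 < C ∧ ∀ d : ℕ, 1 ≤ d →
      ∀ μ : Measure (EuclideanSpace ℝ (Fin d)), IsProbabilityMeasure μ →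
        IsCentered μ → IsIsotropic μ → IsLogConcave μ →
        ∀ φ : EuclideanSpace ℝ (Fin d) → ℝ, IsBrenierPotential φ μ →
          ∀ x : EuclideanSpace ℝ (Fin d), ‖gradient φ x‖ ≤ C * (d + ‖x‖ ^ 2) := by
  refine ⟨288, by norm_num, ?_⟩
  intro d hd μ hμ _ hi hlc φ ⟨hc, hdiff, hmap⟩ x
  by_cases hy : gradient φ x = 0
  · rw [hy, norm_zero]; positivity
  set t := ‖gradient φ x‖ with ht
  have ht0 : 0 < t := norm_pos_iff.2 hy
  set r : ℝ := √d with hr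
  have hd' : (1 : ℝ) ≤ d := by exact_mod_cast hd
  have hr0 : 0 < r := Real.sqrt_pos.2 (by linarith)
  have hr2 : r ^ 2 = d := Real.sq_sqrt (by linarith)
  set h : EE d := (2 * r / t) • gradient φ x with hh
  have hhn : ‖h‖ = 2 * r := by
    rw [hh, norm_smul, ← ht, Real.norm_of_nonneg (by positivity)]
    field_simp
  have hinn : ⟪gradient φ x, h⟫ = 2 * r * t := by
    rw [hh, inner_smul_right, real_inner_self_eq_norm_sq, ← ht]
    field_simp
  have hmain : ∀ z : EE d, (∀ i, |z i - (x + h) i| < 1) → ‖z‖ ≤ ‖x‖ + 3 * r ∧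
      t / 3 ≤ ‖gradient φ z‖ := by
    intro z hz
    have h1 : ‖z - (x + h)‖ ≤ r := cube_norm hz
    have e1 : z - x = h + (z - (x + h)) := by abel
    have h2 : ‖z - x‖ ≤ 3 * r := by
      rw [e1]
      refine (norm_add_le _ _).trans ?_
      linarith
    constructor
    · have : z = x + (z - x) := by abel
      rw [this]
      refine (norm_add_le _ _).trans ?_
      linarith
    · have h3 := grad_mono hc hdiff x z
      have h4 : r * t ≤ ⟪gradient φ x, z - x⟫ := by
        rw [e1, inner_add_right, hinn]
        have := abs_le.1 (abs_real_inner_le_norm (gradient φ x) (z - (x + h)))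
        rw [← ht] at this
        nlinarith [this.1]
      have h5 := real_inner_le_norm (gradient φ z) (z - x)
      have h6 : ‖gradient φ z‖ * ‖z - x‖ ≤ ‖gradient φ z‖ * (3 * r) := by gcongr
      have h7 : r * t ≤ r * (3 * ‖gradient φ z‖) := by linarith
      have := le_of_mul_le_mul_left h7 hr0
      linarith
  have hae : AEMeasurable (gradient φ) (stdGaussian d) := by
    by_contra hcon
    rw [Measure.map_of_not_aemeasurable hcon] at hmap
    exact IsProbabilityMeasure.ne_zero μ hmap.symm
  have hS : MeasurableSet {y : EE d | t / 3 ≤ ‖y‖} := measurableSet_le (by fun_prop) (by fun_prop)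
  have hfin : ENNReal.ofReal (Real.exp (-d - (‖x‖ + 3 * r) ^ 2 / 2)) ≤
      ENNReal.ofReal (Real.exp (2 * d - t / 3 / 8)) := by
    refine (gauss_lower (x + h) fun z hz => (hmain z hz).1).trans (le_trans ?_
      (tail_bound hd hi hlc (t / 3)))
    rw [← hmap, Measure.map_apply_of_aemeasurable hae hS]
    exact measure_mono fun z hz => (hmain z hz).2
  rw [ENNReal.ofReal_le_ofReal_iff (Real.exp_pos _).le, Real.exp_le_exp] at hfin
  nlinarith [sq_nonneg (‖x‖ - 3 * r), sq_nonneg ‖x‖]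
end
end

section
/- Let μ be a centered probability measure on ℝ^d satisfying a Gaussian concentration inequality with constant β > 0, and let T be a Brenier map sending the standard Gaussian measure γ onto μ. Then |T(x)| ≤ 12 β^{-1/2} √(|x|² + 17d) for every x ∈ ℝ^d. -/
open MeasureTheory Real
open scoped RealInnerProductSpace ENNReal

noncomputable section

/-- `μ` satisfies a Gaussian concentration inequality with constant `β`: for every
`1`-Lipschitz `f` and every `r ≥ 0`, `μ({f ≥ ∫ f dμ + r}) ≤ exp(-β r²/2)`. -/
def GaussianConcentration {d : ℕ} (μ : Measure (EuclideanSpace ℝ (Fin d))) (β : ℝ) : Prop :=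
  ∀ f : EuclideanSpace ℝ (Fin d) → ℝ, LipschitzWith 1 f → ∀ r : ℝ, 0 ≤ r →
    μ {x | (∫ y, f y ∂μ) + r ≤ f x} ≤ ENNReal.ofReal (Real.exp (-β * r ^ 2 / 2))

lemma grad_mono_aux {d : ℕ} (φ : EuclideanSpace ℝ (Fin d) → ℝ)
    (hc : ConvexOn ℝ Set.univ φ) (hd : Differentiable ℝ φ) (x z : EuclideanSpace ℝ (Fin d)) :
    ⟪gradient φ x, z - x⟫ ≤ ⟪gradient φ z, z - x⟫ := by
  have hder : ∀ t : ℝ, HasDerivAt (fun t : ℝ => φ (AffineMap.lineMap x z t))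
      (⟪gradient φ (AffineMap.lineMap x z t), z - x⟫) t := by
    intro t
    have h1 := (hd (AffineMap.lineMap x z t)).hasGradientAt.hasFDerivAt
    have h2 : HasDerivAt (fun t : ℝ => (AffineMap.lineMap x z t : EuclideanSpace ℝ (Fin d)))
      (z - x) t := AffineMap.hasDerivAt_lineMap
    have h3 := h1.comp_hasDerivAt t h2
    simp only [InnerProductSpace.toDual_apply_apply] at h3
    exact h3
  have hconv : ConvexOn ℝ Set.univ (fun t : ℝ => φ (AffineMap.lineMap x z t)) := by
    have := hc.comp_affineMap (AffineMap.lineMap (k := ℝ) x z)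
    rw [Set.preimage_univ] at this
    exact this
  have hm := hconv.monotoneOn_deriv (fun t _ => (hder t).differentiableAt)
  have := hm (Set.mem_univ 0) (Set.mem_univ 1) zero_le_one
  rw [(hder 0).deriv, (hder 1).deriv] at this
  simpa using this

lemma second_moment_aux {d : ℕ} (μ : Measure (EuclideanSpace ℝ (Fin d)))
    (β : ℝ) (hβ : 0 < β)
    (hconc : GaussianConcentration μ β) (f : EuclideanSpace ℝ (Fin d) → ℝ)
    (hf : LipschitzWith 1 f) (h0 : ∫ y, f y ∂μ = 0) :
    ∫⁻ y, ENNReal.ofReal (f y ^ 2) ∂μ ≤ ENNReal.ofReal (4 / β) := by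
  have h1 := hconc f hf
  have h2 := hconc (fun y => - f y) hf.neg
  rw [integral_neg] at h2
  rw [h0] at h1 h2
  simp only [neg_zero, zero_add] at h1 h2
  have h3 := lintegral_rpow_eq_lintegral_meas_le_mul μ (f := fun y => |f y|)
    (Filter.Eventually.of_forall fun y => abs_nonneg _)
    (hf.continuous.abs.measurable.aemeasurable) (p := 2) two_pos
  have h4 : ∫⁻ y, ENNReal.ofReal (f y ^ 2) ∂μ = ∫⁻ y, ENNReal.ofReal (|f y| ^ (2:ℝ)) ∂μ := by
    simp
  rw [h4, h3]
  have h5 : ∀ t ∈ Set.Ioi (0:ℝ), μ {a | t ≤ |f a|} * ENNReal.ofReal (t ^ ((2:ℝ) - 1))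
      ≤ ENNReal.ofReal (2 * (t ^ (1:ℝ) * Real.exp (-(β/2) * t ^ (2:ℝ)))) := by
    intro t ht
    have ht : 0 < t := ht
    have hs : {a | t ≤ |f a|} ⊆ {a | t ≤ f a} ∪ {a | t ≤ - f a} := by
      intro a ha
      exact le_abs.mp (show t ≤ |f a| from ha)
    have hm : μ {a | t ≤ |f a|} ≤ ENNReal.ofReal (2 * Real.exp (-β * t ^ 2 / 2)) := by
      refine (measure_mono hs).trans ((measure_union_le _ _).trans ?_)
      rw [two_mul, ENNReal.ofReal_add (by positivity) (by positivity)]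
      exact add_le_add (h1 t ht.le) (h2 t ht.le)
    refine (mul_le_mul_left hm _).trans ?_
    rw [← ENNReal.ofReal_mul (by positivity)]
    apply ENNReal.ofReal_le_ofReal
    have : -β * t ^ 2 / 2 = -(β/2) * t ^ (2:ℝ) := by
      rw [rpow_two]; ring
    rw [this]
    norm_num
    apply le_of_eq; ring
  refine (mul_le_mul_right (setLIntegral_mono' measurableSet_Ioi h5) _).trans ?_
  have hi := integrableOn_rpow_mul_exp_neg_mul_rpow (p := 2) (s := 1) (b := β/2)
    (by norm_num) two_pos (by positivity)
  have hv := integral_rpow_mul_exp_neg_mul_rpow (p := 2) (q := 1) (b := β/2)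
    two_pos (by norm_num) (by positivity)
  rw [← ofReal_integral_eq_lintegral_ofReal (hi.const_mul 2), integral_const_mul, hv,
    ← ENNReal.ofReal_mul (by norm_num)]
  · apply ENNReal.ofReal_le_ofReal
    have : (-(1 + 1) / 2 : ℝ) = -1 := by norm_num
    rw [this, rpow_neg_one]
    norm_num
    apply le_of_eq
    field_simp
    norm_num
  · refine (ae_restrict_iff' measurableSet_Ioi).2 (Filter.Eventually.of_forall ?_)
    intro t ht
    have ht : 0 < t := ht
    simp only [Pi.zero_apply]
    positivity

lemma integrable_of_second_aux {d : ℕ} (μ : Measure (EuclideanSpace ℝ (Fin d)))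
    [IsProbabilityMeasure μ]
    (f : EuclideanSpace ℝ (Fin d) → ℝ) (hf : Continuous f) (C : ℝ)
    (h : ∫⁻ y, ENNReal.ofReal (f y ^ 2) ∂μ ≤ ENNReal.ofReal C) :
    Integrable (fun y => f y ^ 2) μ ∧ Integrable f μ := by
  have h1 : Integrable (fun y => f y ^ 2) μ := by
    refine ⟨(hf.pow 2).aestronglyMeasurable, ?_⟩
    rw [hasFiniteIntegral_iff_ofReal (Filter.Eventually.of_forall fun y => sq_nonneg _)]
    exact h.trans_lt ENNReal.ofReal_lt_top
  exact ⟨h1, ((memLp_two_iff_integrable_sq hf.aestronglyMeasurable).2 h1).integrable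
    (by norm_num)⟩

lemma norm_mean_aux {d : ℕ} (μ : Measure (EuclideanSpace ℝ (Fin d)))
    [IsProbabilityMeasure μ] (hcent : IsCentered μ) (β : ℝ) (hβ : 0 < β)
    (hconc : GaussianConcentration μ β) (hd : 0 < d) :
    ∫ y, ‖y‖ ∂μ ≤ 2 * Real.sqrt (d / β) := by
  by_cases hint : Integrable (fun y : EuclideanSpace ℝ (Fin d) => ‖y‖) μ
  swap
  · rw [integral_undef hint]; positivity
  have hid : Integrable (fun y : EuclideanSpace ℝ (Fin d) => y) μ :=
    (integrable_norm_iff continuous_id.aestronglyMeasurable).1 hint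
  have hi : ∀ i : Fin d, Integrable (fun y : EuclideanSpace ℝ (Fin d) => y i ^ 2) μ ∧
      ∫ y, y i ^ 2 ∂μ ≤ 4 / β := by
    intro i
    have hc : Continuous (fun y : EuclideanSpace ℝ (Fin d) => y i) := by fun_prop
    have hl : LipschitzWith 1 (fun y : EuclideanSpace ℝ (Fin d) => y i) := by
      apply LipschitzWith.of_dist_le_mul
      intro a b
      rw [dist_eq_norm, dist_eq_norm]
      simpa using PiLp.norm_apply_le (a - b) i
    have h0 : ∫ y : EuclideanSpace ℝ (Fin d), y i ∂μ = 0 := by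
      have := (EuclideanSpace.proj (𝕜 := ℝ) i).integral_comp_comm hid
      have hc' : ∫ y, y ∂μ = 0 := hcent
      rw [hc'] at this
      simpa using this
    have h2 := second_moment_aux μ β hβ hconc _ hl h0
    have h3 := (integrable_of_second_aux μ _ hc _ h2).1
    refine ⟨h3, ?_⟩
    rw [← ofReal_integral_eq_lintegral_ofReal h3
      (Filter.Eventually.of_forall fun y => sq_nonneg _)] at h2
    exact (ENNReal.ofReal_le_ofReal_iff (by positivity)).1 h2
  have hsq : ∀ y : EuclideanSpace ℝ (Fin d), ‖y‖ ^ 2 = ∑ i, y i ^ 2 := by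
    intro y
    rw [EuclideanSpace.norm_sq_eq]
    simp
  have hI : Integrable (fun y : EuclideanSpace ℝ (Fin d) => ‖y‖ ^ 2) μ := by
    simp_rw [hsq]
    exact integrable_finsetSum _ fun i _ => (hi i).1
  have hS : ∫ y, ‖y‖ ^ 2 ∂μ ≤ d * (4 / β) := by
    simp_rw [hsq]
    rw [integral_finsetSum _ fun i _ => (hi i).1]
    refine (Finset.sum_le_sum fun i _ => (hi i).2).trans ?_
    simp
  set m := ∫ y, ‖y‖ ∂μ with hm
  have hvar : m ^ 2 ≤ ∫ y, ‖y‖ ^ 2 ∂μ := by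
    have h1 : 0 ≤ ∫ y, (‖y‖ - m) ^ 2 ∂μ := integral_nonneg fun y => sq_nonneg _
    have h2 : ∫ y, (‖y‖ - m) ^ 2 ∂μ = ∫ y, ‖y‖ ^ 2 ∂μ - m ^ 2 := by
      have : ∀ y : EuclideanSpace ℝ (Fin d),
          (‖y‖ - m) ^ 2 = ‖y‖ ^ 2 - ((2 * m) * ‖y‖ - m ^ 2) := fun y => by ring
      simp_rw [this]
      have hJ : Integrable (fun y : EuclideanSpace ℝ (Fin d) => (2 * m) * ‖y‖ - m ^ 2) μ :=
        (hint.const_mul _).sub (integrable_const _)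
      rw [integral_sub hI hJ,
        integral_sub (hint.const_mul _) (integrable_const _), integral_const_mul, ← hm]
      simp
      ring
    linarith
  apply le_of_sq_le_sq ?_ (by positivity)
  rw [mul_pow, Real.sq_sqrt (by positivity)]
  calc m ^ 2 ≤ d * (4 / β) := hvar.trans hS
    _ = _ := by ring

lemma gauss_tail_aux {d : ℕ} (hd : 0 < d) :
    stdGaussian d {w | Real.sqrt (5 * d) < ‖w‖} ≤ ENNReal.ofReal (1 / 2) := by
  have hv := GaussianFourier.integral_rexp_neg_mul_sq_norm
    (V := EuclideanSpace ℝ (Fin d)) (b := 1/4) (by norm_num)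
  have hi : Integrable (fun v : EuclideanSpace ℝ (Fin d) => Real.exp (-(1/4) * ‖v‖ ^ 2)) := by
    by_contra h
    rw [integral_undef h] at hv
    have : (0:ℝ) < (π / (1/4)) ^ ((Module.finrank ℝ (EuclideanSpace ℝ (Fin d)) : ℝ) / 2) := by
      positivity
    linarith
  have hmeas : MeasurableSet {w : EuclideanSpace ℝ (Fin d) | Real.sqrt (5 * d) < ‖w‖} :=
    measurableSet_lt measurable_const measurable_norm
  rw [stdGaussian, withDensity_apply _ hmeas]
  set C : ℝ := (2 * π) ^ (-(d:ℝ) / 2) * Real.exp (-(5 * d / 4)) with hC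
  have hC0 : 0 ≤ C := by positivity
  calc _ ≤ ∫⁻ w in {w : EuclideanSpace ℝ (Fin d) | Real.sqrt (5 * d) < ‖w‖},
        ENNReal.ofReal (C * Real.exp (-(1/4) * ‖w‖ ^ 2)) := by
        refine setLIntegral_mono' hmeas ?_
        intro w hw
        have hw : Real.sqrt (5 * d) < ‖w‖ := hw
        have h5 : 5 * (d:ℝ) ≤ ‖w‖ ^ 2 := by
          rw [← Real.sqrt_le_left (norm_nonneg w)]
          exact hw.le
        apply ENNReal.ofReal_le_ofReal
        rw [hC, mul_assoc, ← Real.exp_add]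
        gcongr
        linarith
    _ ≤ ∫⁻ w, ENNReal.ofReal (C * Real.exp (-(1/4) * ‖w‖ ^ 2)) := setLIntegral_le_lintegral _ _
    _ = ENNReal.ofReal (C * (π / (1/4)) ^ ((d:ℝ)/2)) := by
        rw [← ofReal_integral_eq_lintegral_ofReal (hi.const_mul C)
          (Filter.Eventually.of_forall fun w => by positivity), integral_const_mul, hv]
        simp
    _ ≤ ENNReal.ofReal (1/2) := by
        apply ENNReal.ofReal_le_ofReal
        have e1 : (π / (1/4)) ^ ((d:ℝ)/2) = (2 * π) ^ ((d:ℝ)/2) * 2 ^ ((d:ℝ)/2) := by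
          rw [← Real.mul_rpow (by positivity) (by positivity)]
          congr 1; ring
        have e2 : (2 * π) ^ (-(d:ℝ) / 2) * (2 * π) ^ ((d:ℝ)/2) = 1 := by
          rw [← Real.rpow_add (by positivity)]
          rw [show -(d:ℝ)/2 + d/2 = 0 by ring, Real.rpow_zero]
        have e3 : (2:ℝ) ^ ((d:ℝ)/2) = Real.exp (Real.log 2 * (d / 2)) := by
          rw [Real.rpow_def_of_pos two_pos]
        have hl := Real.log_two_lt_d9
        have hd1 : (1:ℝ) ≤ d := by exact_mod_cast hd
        calc C * (π / (1/4)) ^ ((d:ℝ)/2)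
            = ((2 * π) ^ (-(d:ℝ) / 2) * (2 * π) ^ ((d:ℝ)/2)) *
              (Real.exp (-(5 * d / 4)) * 2 ^ ((d:ℝ)/2)) := by rw [hC, e1]; ring
          _ = Real.exp (-(5 * d / 4) + Real.log 2 * (d / 2)) := by
              rw [e2, e3, one_mul, Real.exp_add]
          _ ≤ Real.exp (- Real.log 2) := by
              apply Real.exp_le_exp.2
              nlinarith
          _ = 1/2 := by rw [Real.exp_neg, Real.exp_log two_pos]; norm_num

lemma gauss_ball_aux {d : ℕ} (a : EuclideanSpace ℝ (Fin d)) (ρ : ℝ) :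
    ENNReal.ofReal (Real.exp (-‖a‖ ^ 2 - ρ ^ 2 / 2)) * stdGaussian d (Metric.closedBall 0 ρ)
      ≤ stdGaussian d (Metric.closedBall a ρ) := by
  have hB : ∀ c : EuclideanSpace ℝ (Fin d), MeasurableSet (Metric.closedBall c ρ) :=
    fun c => Metric.isClosed_closedBall.measurableSet
  rw [stdGaussian, withDensity_apply _ (hB _), withDensity_apply _ (hB _),
    ← lintegral_const_mul' _ _ ENNReal.ofReal_ne_top,
    ← lintegral_indicator (hB _), ← lintegral_indicator (hB _),
    ← lintegral_add_right_eq_self (μ := volume) ((Metric.closedBall a ρ).indicator _) a]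
  refine lintegral_mono fun w => ?_
  by_cases hw : w ∈ Metric.closedBall (0 : EuclideanSpace ℝ (Fin d)) ρ
  · have hw' : w + a ∈ Metric.closedBall a ρ := by
      simpa [Metric.mem_closedBall, dist_eq_norm] using hw
    rw [Set.indicator_of_mem hw, Set.indicator_of_mem hw',
      ← ENNReal.ofReal_mul (by positivity)]
    apply ENNReal.ofReal_le_ofReal
    have hn : ‖w‖ ≤ ρ := by simpa using hw
    have hn2 : ‖w‖ ^ 2 ≤ ρ ^ 2 := by
      have := norm_nonneg w
      gcongr
    have h3 : ‖w + a‖ ^ 2 ≤ 2 * ‖w‖ ^ 2 + 2 * ‖a‖ ^ 2 := by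
      have := parallelogram_law_with_norm ℝ w a
      nlinarith [sq_nonneg ‖w - a‖]
    rw [mul_left_comm, ← Real.exp_add]
    gcongr
    linarith
  · rw [Set.indicator_of_notMem hw]
    exact zero_le

set_option maxHeartbeats 2000000 in
lemma main_aux {d : ℕ} (μ : Measure (EuclideanSpace ℝ (Fin d)))
    [IsProbabilityMeasure μ] (hcent : IsCentered μ) (β : ℝ) (hβ : 0 < β)
    (hconc : GaussianConcentration μ β)
    (φ : EuclideanSpace ℝ (Fin d) → ℝ) (hφ : IsBrenierPotential φ μ)
    (x : EuclideanSpace ℝ (Fin d)) :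
    ‖gradient φ x‖ ≤ 12 * β ^ (-(1 : ℝ) / 2) * Real.sqrt (‖x‖ ^ 2 + 17 * d) := by
  rcases Nat.eq_zero_or_pos d with rfl | hd
  · have : gradient φ x = 0 := Subsingleton.elim _ _
    rw [this, norm_zero]; positivity
  obtain ⟨hconv, hdiff, hmap⟩ := hφ
  have hae : AEMeasurable (gradient φ) (stdGaussian d) := by
    by_contra h
    rw [Measure.map_of_not_aemeasurable h] at hmap
    exact (IsProbabilityMeasure.ne_zero μ) hmap.symm
  have hone : stdGaussian d Set.univ = 1 := by
    have h := measure_univ (μ := μ)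
    rw [← hmap, Measure.map_apply_of_aemeasurable hae MeasurableSet.univ] at h
    simpa using h
  have hd1 : (1:ℝ) ≤ d := by exact_mod_cast hd
  set ρ := Real.sqrt (5 * d) with hρ
  have hρ2 : ρ ^ 2 = 5 * d := Real.sq_sqrt (by positivity)
  have hρ0 : 0 < ρ := Real.sqrt_pos.2 (by positivity)
  have hhalf : ENNReal.ofReal (1/2) ≤ stdGaussian d (Metric.closedBall 0 ρ) := by
    have h1 := gauss_tail_aux hd
    have h2 : (1 : ℝ≥0∞) ≤ stdGaussian d (Metric.closedBall 0 ρ) + ENNReal.ofReal (1/2) := by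
      rw [← hone]
      have : (Set.univ : Set (EuclideanSpace ℝ (Fin d))) ⊆
          Metric.closedBall 0 ρ ∪ {w | Real.sqrt (5 * d) < ‖w‖} := by
        intro w _
        rcases le_or_gt ‖w‖ ρ with h | h
        · left; simpa using h
        · right; exact h
      refine (measure_mono this).trans ((measure_union_le _ _).trans ?_)
      gcongr
    have h3 : (1 : ℝ≥0∞) = ENNReal.ofReal (1/2) + ENNReal.ofReal (1/2) := by
      rw [← ENNReal.ofReal_add (by norm_num) (by norm_num)]; norm_num
    rw [h3] at h2
    exact (ENNReal.add_le_add_iff_right ENNReal.ofReal_ne_top).1 h2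
  by_contra hcon
  push Not at hcon
  set y := gradient φ x with hy
  set Q := Real.sqrt (‖x‖ ^ 2 + 17 * d) with hQ
  have hQ2 : Q ^ 2 = ‖x‖ ^ 2 + 17 * d := Real.sq_sqrt (by positivity)
  have hQ0 : 0 < Q := Real.sqrt_pos.2 (by positivity)
  set s := Real.sqrt β with hs
  have hs0 : 0 < s := Real.sqrt_pos.2 hβ
  have hs2 : s ^ 2 = β := Real.sq_sqrt hβ.le
  have hβs : β ^ (-(1:ℝ)/2) = s⁻¹ := by
    rw [hs, Real.sqrt_eq_rpow, ← Real.rpow_neg hβ.le]; norm_num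
  rw [hβs] at hcon
  have hys : 12 * Q < ‖y‖ * s := by
    have := mul_lt_mul_of_pos_right hcon hs0
    calc 12 * Q = 12 * s⁻¹ * Q * s := by field_simp
      _ < _ := this
  have hy0 : 0 < ‖y‖ := by
    by_contra h
    have : ‖y‖ = 0 := le_antisymm (not_lt.1 h) (norm_nonneg _)
    rw [this] at hys
    linarith
  set u := ‖y‖⁻¹ • y with hu
  have hun : ‖u‖ = 1 := by
    rw [hu, norm_smul, norm_inv, norm_norm]; field_simp
  have hyu : y = ‖y‖ • u := by
    rw [hu, smul_smul, mul_inv_cancel₀ hy0.ne', one_smul]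
  set a := x + (2 * ρ) • u with ha
  set M := 2 * Real.sqrt (d / β) with hM
  have hmean := norm_mean_aux μ hcent β hβ hconc hd
  set r := ‖y‖ / 3 - M with hr
  have hMs : M * s = 2 * Real.sqrt d := by
    rw [hM, hs, mul_assoc, ← Real.sqrt_mul (by positivity), div_mul_cancel₀ _ hβ.ne']
  have hdQ : 4 * Real.sqrt d ≤ Q := by
    apply le_of_sq_le_sq ?_ hQ0.le
    rw [mul_pow, Real.sq_sqrt (by positivity), hQ2]
    nlinarith [sq_nonneg ‖x‖]
  have hrs : 7 / 2 * Q ≤ r * s := by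
    rw [hr, sub_mul, hMs]; linarith
  have hr0 : 0 ≤ r := by
    by_contra h
    nlinarith
  have hsub : Metric.closedBall a ρ ⊆ gradient φ ⁻¹' {w | (∫ y, ‖y‖ ∂μ) + r ≤ ‖w‖} := by
    intro z hz
    have hz : ‖z - a‖ ≤ ρ := by simpa [dist_eq_norm] using hz
    have hzx : z - x = (z - a) + (2 * ρ) • u := by rw [ha]; abel
    have hnzx : ‖z - x‖ ≤ 3 * ρ := by
      rw [hzx]
      refine (norm_add_le _ _).trans ?_
      rw [norm_smul, hun, Real.norm_of_nonneg (by positivity)]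
      linarith
    have hin : ‖y‖ * ρ ≤ ⟪y, z - x⟫ := by
      have h1 : ρ ≤ ⟪u, z - x⟫ := by
        rw [hzx, inner_add_right, inner_smul_right, real_inner_self_eq_norm_sq, hun]
        have := abs_le.1 (abs_real_inner_le_norm u (z - a))
        rw [hun] at this
        linarith [this.1]
      rw [hyu, inner_smul_left]
      simp only [norm_smul, norm_norm, hun, mul_one, conj_trivial]
      gcongr
    have hmono := grad_mono_aux φ hconv hdiff x z
    have hcs := real_inner_le_norm (gradient φ z) (z - x)
    have h3 : ‖y‖ * ρ ≤ ‖gradient φ z‖ * (3 * ρ) :=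
      hin.trans (hmono.trans (hcs.trans (by gcongr)))
    have h4 : ‖y‖ / 3 ≤ ‖gradient φ z‖ := by
      by_contra h
      push Not at h
      nlinarith
    show (∫ y, ‖y‖ ∂μ) + r ≤ ‖gradient φ z‖
    rw [hr]; linarith
  have hmS : MeasurableSet {w : EuclideanSpace ℝ (Fin d) | (∫ y, ‖y‖ ∂μ) + r ≤ ‖w‖} :=
    measurableSet_le measurable_const measurable_norm
  have hup : stdGaussian d (Metric.closedBall a ρ) ≤
      ENNReal.ofReal (Real.exp (-β * r ^ 2 / 2)) := by
    refine (measure_mono hsub).trans ?_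
    rw [← Measure.map_apply_of_aemeasurable hae hmS, hmap]
    exact hconc _ lipschitzWith_one_norm r hr0
  have hlow : ENNReal.ofReal (Real.exp (-‖a‖ ^ 2 - ρ ^ 2 / 2) * (1/2)) ≤
      ENNReal.ofReal (Real.exp (-β * r ^ 2 / 2)) := by
    rw [ENNReal.ofReal_mul (by positivity)]
    exact (mul_le_mul_right hhalf _).trans ((gauss_ball_aux a ρ).trans hup)
  have hreal := (ENNReal.ofReal_le_ofReal_iff (by positivity)).1 hlow
  have hlog : (1/2 : ℝ) = Real.exp (- Real.log 2) := by
    rw [Real.exp_neg, Real.exp_log two_pos]; norm_num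
  rw [hlog, ← Real.exp_add, Real.exp_le_exp] at hreal
  have han : ‖a‖ ≤ ‖x‖ + 2 * ρ := by
    rw [ha]
    refine (norm_add_le _ _).trans ?_
    rw [norm_smul, hun, Real.norm_of_nonneg (by positivity), mul_one]
  have ha2 : ‖a‖ ^ 2 ≤ 2 * ‖x‖ ^ 2 + 8 * ρ ^ 2 := by
    have : ‖a‖ ^ 2 ≤ (‖x‖ + 2 * ρ) ^ 2 := by gcongr
    nlinarith [sq_nonneg (‖x‖ - 2 * ρ)]
  have hl2 := Real.log_two_lt_d9
  have hfin : (7 / 2 * Q) ^ 2 ≤ β * r ^ 2 := by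
    calc (7 / 2 * Q) ^ 2 ≤ (r * s) ^ 2 := by gcongr
      _ = β * r ^ 2 := by rw [mul_pow, hs2]; ring
  rw [mul_pow, hQ2] at hfin
  nlinarith [sq_nonneg ‖x‖]

/-- If `μ` is a centered probability measure on `ℝ^d` satisfying Gaussian concentration
with constant `β > 0` and `T = ∇φ` is a Brenier map sending the standard Gaussian onto `μ`,
then `|T(x)| ≤ 12 β^{-1/2} √(|x|² + 17 d)` for every `x`. -/
theorem statement_1 {d : ℕ} (μ : Measure (EuclideanSpace ℝ (Fin d)))
    [IsProbabilityMeasure μ] (hcent : IsCentered μ) (β : ℝ) (hβ : 0 < β)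
    (hconc : GaussianConcentration μ β)
    (φ : EuclideanSpace ℝ (Fin d) → ℝ) (hφ : IsBrenierPotential φ μ)
    (x : EuclideanSpace ℝ (Fin d)) :
    ‖gradient φ x‖ ≤ 12 * β ^ (-(1 : ℝ) / 2) * Real.sqrt (‖x‖ ^ 2 + 17 * d) :=
  main_aux μ hcent β hβ hconc φ hφ x
end
end

section
/- There exists a universal constant C > 0 with the following property. Let T = ∇φ be the Brenier map (with φ : ℝ^d → ℝ smooth and convex) sending the standard Gaussian measure γ onto a probability measure μ = e^{-V} dx which is centered and isotropic, and assume that c₁ Id ≥ Hess V(x) ≥ (c₂/(d + |x|)) Id for all x ∈ ℝ^d, with c₁ ≥ 1 and c₂ > 0. Then for every x ∈ ℝ^d, the operator norm of ∇T(x) satisfies ‖∇T(x)‖_op ≤ max(C c₁²/c₂², 1) · (d + |x|²)². -/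
open MeasureTheory Real
open scoped RealInnerProductSpace ENNReal

noncomputable section

/-- Eigenbasis of a nondegenerate nonnegative symmetric operator. -/
lemma br_eig {d : ℕ} (A : EuclideanSpace ℝ (Fin d) →L[ℝ] EuclideanSpace ℝ (Fin d))
    (hs : ∀ v w, ⟪A v, w⟫ = ⟪v, A w⟫) (hp : ∀ v, 0 ≤ ⟪A v, v⟫) (hd : A.det ≠ 0) :
    ∃ (b : OrthonormalBasis (Fin d) ℝ (EuclideanSpace ℝ (Fin d))) (l : Fin d → ℝ),
      (∀ i, 0 < l i) ∧ (∀ i, A (b i) = l i • b i) ∧ A.det = ∏ i, l i := by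
  have hS : (A : EuclideanSpace ℝ (Fin d) →ₗ[ℝ] EuclideanSpace ℝ (Fin d)).IsSymmetric :=
    fun v w => hs v w
  have hn : Module.finrank ℝ (EuclideanSpace ℝ (Fin d)) = d := by simp
  have hdet : A.det = ∏ i, hS.eigenvalues hn i := by
    have := hS.det_eq_prod_eigenvalues hn
    simpa using this
  have hA : ∀ i, A (hS.eigenvectorBasis hn i) = hS.eigenvalues hn i • hS.eigenvectorBasis hn i := by
    intro i
    exact hS.apply_eigenvectorBasis hn i
  refine ⟨hS.eigenvectorBasis hn, hS.eigenvalues hn, fun i => ?_, hA, hdet⟩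
  have h0 : 0 ≤ hS.eigenvalues hn i := by
    have := hp (hS.eigenvectorBasis hn i)
    rw [hA i, inner_smul_left] at this
    simpa using this
  refine lt_of_le_of_ne h0 (fun h => hd ?_)
  rw [hdet]
  exact Finset.prod_eq_zero (Finset.mem_univ i) h.symm

/-- Concavity of `log det`, in a form adapted to an eigenbasis. -/
lemma br_logdet {d : ℕ} (M : EuclideanSpace ℝ (Fin d) →L[ℝ] EuclideanSpace ℝ (Fin d))
    (hs : ∀ v w, ⟪M v, w⟫ = ⟪v, M w⟫) (hp : ∀ v, 0 ≤ ⟪M v, v⟫) (hd : 0 < M.det)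
    (b : OrthonormalBasis (Fin d) ℝ (EuclideanSpace ℝ (Fin d))) (l : Fin d → ℝ)
    (hl : ∀ i, 0 < l i) :
    Real.log M.det ≤ Real.log (∏ i, l i) + ∑ i, (l i)⁻¹ * ⟪M (b i), b i⟫ - d := by
  set L : EuclideanSpace ℝ (Fin d) →ₗ[ℝ] EuclideanSpace ℝ (Fin d) :=
    M.toLinearMap with hL
  have hpos : L.IsPositive := ⟨fun v w => hs v w, fun x => hp x⟩
  have hps := (LinearMap.posSemidef_toMatrix_iff b).2 hpos
  set D : Matrix (Fin d) (Fin d) ℝ := Matrix.diagonal (fun i => (Real.sqrt (l i))⁻¹) with hD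
  set N := D.conjTranspose * (L.toMatrix b.toBasis b.toBasis) * D with hN
  have hNp : N.PosSemidef := hps.conjTranspose_mul_mul_same D
  have hDD : D.conjTranspose = D := by
    rw [hD, Matrix.diagonal_conjTranspose]; rfl
  have hdetN : N.det = M.det * (∏ i, l i)⁻¹ := by
    rw [hN, Matrix.det_mul, Matrix.det_mul, hDD, LinearMap.det_toMatrix, hD, Matrix.det_diagonal]
    have : (∏ i, (Real.sqrt (l i))⁻¹) * (∏ i, (Real.sqrt (l i))⁻¹) = (∏ i, l i)⁻¹ := by
      rw [← Finset.prod_mul_distrib, ← Finset.prod_inv_distrib]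
      refine Finset.prod_congr rfl fun i _ => ?_
      rw [← mul_inv, Real.mul_self_sqrt (hl i).le]
    have h2 : LinearMap.det L = M.det := rfl
    rw [h2, ← this]; ring
  have htr : N.trace = ∑ i, (l i)⁻¹ * ⟪M (b i), b i⟫ := by
    rw [Matrix.trace]
    refine Finset.sum_congr rfl fun i _ => ?_
    rw [hN, hDD, hD, Matrix.diag_apply, Matrix.mul_diagonal, Matrix.diagonal_mul,
      LinearMap.toMatrix_apply]
    have : (b.toBasis.repr (L (b.toBasis i))) i = ⟪M (b i), b i⟫ := by
      simp [OrthonormalBasis.repr_apply_apply, hL, real_inner_comm]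
    rw [this]
    have h3 : (Real.sqrt (l i))⁻¹ * (Real.sqrt (l i))⁻¹ = (l i)⁻¹ := by
      rw [← mul_inv, Real.mul_self_sqrt (hl i).le]
    rw [← h3]; ring
  have hprod : 0 < ∏ i, l i := Finset.prod_pos fun i _ => hl i
  have hdpos : 0 < N.det := by rw [hdetN]; positivity
  have he := hNp.isHermitian.det_eq_prod_eigenvalues
  have ht := hNp.isHermitian.trace_eq_sum_eigenvalues
  simp only [RCLike.ofReal_real_eq_id, id] at he ht
  have hne : ∀ i, hNp.isHermitian.eigenvalues i ≠ 0 := by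
    intro i h
    rw [he, Finset.prod_eq_zero (Finset.mem_univ i) h] at hdpos
    exact lt_irrefl _ hdpos
  have hev : ∀ i, 0 < hNp.isHermitian.eigenvalues i := fun i =>
    lt_of_le_of_ne (hNp.eigenvalues_nonneg i) (hne i).symm
  have hlog : Real.log N.det ≤ N.trace - d := by
    rw [he, ht, Real.log_prod (fun i _ => hne i)]
    calc ∑ i, Real.log (hNp.isHermitian.eigenvalues i)
        ≤ ∑ i, (hNp.isHermitian.eigenvalues i - 1) :=
          Finset.sum_le_sum fun i _ => Real.log_le_sub_one_of_pos (hev i)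
      _ = _ := by simp
  rw [hdetN, Real.log_mul hd.ne' (inv_pos.2 hprod).ne', Real.log_inv, htr] at hlog
  linarith

section Calc
variable {E : Type*} [NormedAddCommGroup E] [InnerProductSpace ℝ E] [CompleteSpace E]

lemma br_two_le : (2 : WithTop ℕ∞) ≤ ((⊤ : ℕ∞) : WithTop ℕ∞) := by
  have h : ((2 : ℕ∞) : WithTop ℕ∞) ≤ ((⊤ : ℕ∞) : WithTop ℕ∞) := WithTop.coe_le_coe.2 le_top
  exact h

lemma br_T_contDiff {φ : E → ℝ} (hφ : ContDiff ℝ (⊤ : ℕ∞) φ) :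
    ContDiff ℝ (⊤ : ℕ∞) (gradient φ) := by
  have h : ContDiff ℝ (⊤ : ℕ∞) (fderiv ℝ φ) := hφ.fderiv_right (by simp)
  exact (InnerProductSpace.toDual ℝ E).symm.contDiff.comp h

lemma br_H_contDiff {φ : E → ℝ} (hφ : ContDiff ℝ (⊤ : ℕ∞) φ) :
    ContDiff ℝ (⊤ : ℕ∞) (fderiv ℝ (gradient φ)) :=
  (br_T_contDiff hφ).fderiv_right (by simp)

lemma br_inner_T {φ : E → ℝ} (x v : E) : ⟪gradient φ x, v⟫ = fderiv ℝ φ x v := inner_gradient_left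

lemma br_line {F : Type*} [NormedAddCommGroup F] [NormedSpace ℝ F] {f : E → F}
    (hf : Differentiable ℝ f) (x v : E) (s : ℝ) :
    HasDerivAt (fun s : ℝ => f (x + s • v)) (fderiv ℝ f (x + s • v) v) s := by
  have h1 : HasDerivAt (fun s : ℝ => x + s • v) v s := by
    simpa using ((hasDerivAt_id s).smul_const v).const_add x
  exact (hf (x + s • v)).hasFDerivAt.comp_hasDerivAt s h1

lemma br_line_phi {φ : E → ℝ} (hφ : Differentiable ℝ φ) (x v : E) (s : ℝ) :
    HasDerivAt (fun s : ℝ => φ (x + s • v)) ⟪gradient φ (x + s • v), v⟫ s := by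
  rw [br_inner_T]; exact br_line hφ x v s

lemma br_H_eq {φ : E → ℝ} (hφ : ContDiff ℝ 2 φ) (x v w : E) :
    ⟪fderiv ℝ (gradient φ) x v, w⟫ = fderiv ℝ (fderiv ℝ φ) x v w := by
  have h : ContDiff ℝ 1 (fderiv ℝ φ) := hφ.fderiv_right (by norm_num)
  have hd : DifferentiableAt ℝ (fderiv ℝ φ) x := h.differentiable (by norm_num) x
  have : fderiv ℝ (gradient φ) x v
      = (InnerProductSpace.toDual ℝ E).symm (fderiv ℝ (fderiv ℝ φ) x v) := by
    have h1 : HasFDerivAt (gradient φ) _ x :=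
      ((InnerProductSpace.toDual ℝ E).symm.toContinuousLinearEquiv.toContinuousLinearMap).hasFDerivAt.comp
        x hd.hasFDerivAt
    rw [h1.fderiv]; rfl
  rw [this, InnerProductSpace.toDual_symm_apply]

lemma br_symm {φ : E → ℝ} (hφ : ContDiff ℝ 2 φ) (x v w : E) :
    ⟪fderiv ℝ (gradient φ) x v, w⟫ = ⟪v, fderiv ℝ (gradient φ) x w⟫ := by
  rw [br_H_eq hφ, real_inner_comm, br_H_eq hφ]
  exact (hφ.contDiffAt.isSymmSndFDerivAt (by simp)).eq v w

lemma br_K_symm {φ : E → ℝ} (hφ : ContDiff ℝ (⊤ : ℕ∞) φ) (x u v w : E) :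
    ⟪fderiv ℝ (fderiv ℝ (gradient φ)) x u v, w⟫ = ⟪fderiv ℝ (fderiv ℝ (gradient φ)) x u w, v⟫ := by
  have hd : Differentiable ℝ (fderiv ℝ (gradient φ)) :=
    (br_H_contDiff hφ).differentiable (by simp)
  have h2 : ContDiff ℝ 2 φ := hφ.of_le br_two_le
  have key : ∀ v w : E, HasDerivAt (fun s : ℝ => ⟪fderiv ℝ (gradient φ) (x + s • u) v, w⟫)
      ⟪fderiv ℝ (fderiv ℝ (gradient φ)) x u v, w⟫ 0 := by
    intro v w
    have h := br_line hd x u 0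
    simp only [zero_smul, add_zero] at h
    have h3 := (h.clm_apply (hasDerivAt_const (0:ℝ) v))
    simp only [map_zero, add_zero] at h3
    have h4 := h3.inner ℝ (hasDerivAt_const (0:ℝ) w)
    simpa using h4
  refine (key v w).unique ?_
  refine (key w v).congr_of_eventuallyEq (Filter.Eventually.of_forall fun s => ?_)
  simp only []
  rw [br_symm h2, real_inner_comm]

lemma br_K_symm' {φ : E → ℝ} (hφ : ContDiff ℝ (⊤ : ℕ∞) φ) (x u v : E) :
    fderiv ℝ (fderiv ℝ (gradient φ)) x u v = fderiv ℝ (fderiv ℝ (gradient φ)) x v u :=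
  ((br_T_contDiff hφ).contDiffAt.isSymmSndFDerivAt (by simpa using br_two_le)).eq u v

lemma br_convex {φ : E → ℝ} (hd : Differentiable ℝ φ) (hc : ConvexOn ℝ Set.univ φ) (x z : E) :
    φ x + ⟪gradient φ x, z - x⟫ ≤ φ z := by
  have hg : ConvexOn ℝ Set.univ (fun s : ℝ => φ (x + s • (z - x))) := by
    have := hc.comp_affineMap (AffineMap.lineMap x z : ℝ →ᵃ[ℝ] E)
    refine this.congr ?_ |>.subset (Set.subset_univ _) convex_univ
    intro s _
    simp [AffineMap.lineMap_apply, add_comm]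
  have h := br_line_phi hd x (z - x) 0
  have := hg.le_slope_of_hasDerivAt (Set.mem_univ (0:ℝ)) (Set.mem_univ (1:ℝ)) one_pos h
  rw [slope_def_field] at this
  simp only [zero_smul, add_zero, one_smul, sub_zero, div_one, add_sub_cancel] at this
  linarith

lemma br_mono {φ : E → ℝ} (hd : Differentiable ℝ φ) (hc : ConvexOn ℝ Set.univ φ) (x z : E) :
    0 ≤ ⟪gradient φ z - gradient φ x, z - x⟫ := by
  have h1 := br_convex hd hc x z
  have h2 := br_convex hd hc z x
  have h3 : ⟪gradient φ z, x - z⟫ = - ⟪gradient φ z, z - x⟫ := by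
    rw [← inner_neg_right, neg_sub]
  rw [inner_sub_left]
  linarith

lemma br_line_mono {φ : E → ℝ} (hd : Differentiable ℝ φ) (hc : ConvexOn ℝ Set.univ φ) (x v : E) :
    Monotone (fun s : ℝ => ⟪gradient φ (x + s • v), v⟫) := by
  intro s t hst
  rcases hst.eq_or_lt with rfl | hlt
  · exact le_rfl
  have h := br_mono hd hc (x + s • v) (x + t • v)
  have h2 : x + t • v - (x + s • v) = (t - s) • v := by rw [sub_smul]; abel
  rw [h2, inner_smul_right, inner_sub_left] at h
  have h3 : 0 < t - s := sub_pos.2 hlt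
  have := nonneg_of_mul_nonneg_right h h3
  simp only; linarith

lemma br_line_T {φ : E → ℝ} (hφ : ContDiff ℝ 2 φ) (x v w : E) (s : ℝ) :
    HasDerivAt (fun s : ℝ => ⟪gradient φ (x + s • v), w⟫)
      ⟪fderiv ℝ (gradient φ) (x + s • v) v, w⟫ s := by
  have h : ContDiff ℝ 1 (fderiv ℝ φ) := hφ.fderiv_right (by norm_num)
  have hd : Differentiable ℝ (gradient φ) :=
    ((InnerProductSpace.toDual ℝ E).symm.contDiff.comp h : ContDiff ℝ 1 _).differentiable (by norm_num)
  have := (br_line hd x v s).inner ℝ (hasDerivAt_const s w)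
  simpa using this

lemma br_psd {φ : E → ℝ} (hφ : ContDiff ℝ 2 φ) (hc : ConvexOn ℝ Set.univ φ) (x v : E) :
    0 ≤ ⟪fderiv ℝ (gradient φ) x v, v⟫ := by
  have h := br_line_T hφ x v v 0
  have h2 := (br_line_mono (hφ.differentiable (by norm_num)) hc x v).deriv_nonneg (x := 0)
  rw [h.deriv] at h2
  simpa using h2

/-- second order necessary condition at a maximum -/
lemma br_snd {G G' : ℝ → ℝ} {g : ℝ} (h1 : ∀ s, HasDerivAt G (G' s) s) (h2 : HasDerivAt G' g 0)
    (hmax : ∀ s, G s ≤ G 0) : g ≤ 0 := by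
  by_contra hg
  push Not at hg
  have hd : deriv G = G' := funext fun s => (h1 s).deriv
  have hG0 : deriv G 0 = 0 := by
    have hm : IsLocalMax G 0 := Filter.Eventually.of_forall hmax
    exact hm.deriv_eq_zero
  have hmin := isLocalMin_of_deriv_deriv_pos (f := G) (x₀ := 0) (by rw [hd, h2.deriv]; exact hg) hG0
    (h1 0).continuousAt
  have hev : G =ᶠ[nhds 0] fun _ => G 0 := by
    filter_upwards [hmin] with s hs
    exact le_antisymm (hmax s) hs
  have := hev.deriv.deriv
  have h3 := this.eq_of_nhds
  rw [hd, h2.deriv] at h3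
  simp at h3
  linarith

lemma br_taylor {G G' G'' : ℝ → ℝ} {m : ℝ} (h1 : ∀ s, HasDerivAt G (G' s) s)
    (h2 : ∀ s, HasDerivAt G' (G'' s) s) (hm : ∀ s ∈ Set.Icc (0:ℝ) 1, m ≤ G'' s) :
    G 0 + G' 0 + m / 2 ≤ G 1 := by
  have hmono : MonotoneOn (fun s => G' s - m * s) (Set.Icc (0:ℝ) 1) := by
    apply monotoneOn_of_deriv_nonneg (convex_Icc 0 1)
    · exact fun s _ => ((h2 s).sub ((hasDerivAt_id s).const_mul m)).continuousAt.continuousWithinAt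
    · exact fun s _ => ((h2 s).sub ((hasDerivAt_id s).const_mul m)).differentiableAt.differentiableWithinAt
    · intro s hs
      have := ((h2 s).sub ((hasDerivAt_id s).const_mul m)).deriv
      have h4 := hm s (interior_subset hs)
      simp only [id, mul_one] at this
      have h5 : deriv (fun s => G' s - m * s) s = G'' s - m := this
      rw [h5]; linarith
  have hd : ∀ s, HasDerivAt (fun s => G s - G' 0 * s - m / 2 * s ^ 2) (G' s - G' 0 - m * s) s := by
    intro s
    have := ((h1 s).sub ((hasDerivAt_id s).const_mul (G' 0))).sub
      (((hasDerivAt_id s).pow 2).const_mul (m/2))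
    refine (this.congr_deriv ?_)
    simp; ring
  have hmono2 : MonotoneOn (fun s => G s - G' 0 * s - m / 2 * s ^ 2) (Set.Icc (0:ℝ) 1) := by
    apply monotoneOn_of_deriv_nonneg (convex_Icc 0 1)
    · exact fun s _ => (hd s).continuousAt.continuousWithinAt
    · exact fun s _ => (hd s).differentiableAt.differentiableWithinAt
    · intro s hs
      rw [(hd s).deriv]
      have hs' := interior_subset hs
      have := hmono (Set.left_mem_Icc.2 zero_le_one) hs' hs'.1
      simp at this
      linarith
  have := hmono2 (Set.left_mem_Icc.2 zero_le_one) (Set.right_mem_Icc.2 zero_le_one) zero_le_one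
  simp at this
  linarith

lemma br_V_lower {V : E → ℝ} (hV : ContDiff ℝ 2 V) {m : ℝ} (y p : E)
    (h : ∀ s ∈ Set.Icc (0:ℝ) 1, m ≤ iteratedFDeriv ℝ 2 V (y + s • p) ![p, p]) :
    V y + ⟪gradient V y, p⟫ + m / 2 ≤ V (y + p) := by
  have := br_taylor (m := m) (br_line_phi (hV.differentiable (by norm_num)) y p)
    (br_line_T hV y p p) ?_
  · simpa using this
  · intro s hs
    rw [br_H_eq hV]
    have := h s hs
    rwa [iteratedFDeriv_two_apply] at this

end Calc

lemma br_inj {d : ℕ} {φ : EuclideanSpace ℝ (Fin d) → ℝ} (hφ : ContDiff ℝ (⊤ : ℕ∞) φ)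
    (hc : ConvexOn ℝ Set.univ φ) {x y : EuclideanSpace ℝ (Fin d)}
    (hy : (fderiv ℝ (gradient φ) y).det ≠ 0) (h : gradient φ x = gradient φ y) : x = y := by
  have h2 : ContDiff ℝ 2 φ := hφ.of_le br_two_le
  have hdiff : Differentiable ℝ φ := h2.differentiable (by norm_num)
  obtain ⟨b, l, hl, hb, -⟩ := br_eig (fderiv ℝ (gradient φ) y) (br_symm h2 y) (br_psd h2 hc y) hy
  have hm := br_line_mono hdiff hc y (x - y)
  have hz : ⟪fderiv ℝ (gradient φ) y (x - y), x - y⟫ = 0 := by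
    have h3 := (br_line_T h2 y (x - y) (x - y) 0)
    simp only [zero_smul, add_zero] at h3
    have h4 : HasDerivWithinAt (fun s : ℝ => ⟪gradient φ (y + s • (x - y)), x - y⟫) 0
        (Set.Icc 0 1) 0 := by
      refine (hasDerivWithinAt_const (0:ℝ) (Set.Icc (0:ℝ) 1) ⟪gradient φ y, x - y⟫).congr_of_mem ?_
        (Set.left_mem_Icc.2 zero_le_one)
      intro s hs
      have e1 := hm hs.1
      have e2 := hm hs.2
      simp only [zero_smul, add_zero, one_smul, add_sub_cancel] at e1 e2
      rw [h] at e2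
      exact le_antisymm e2 e1
    exact (uniqueDiffOn_Icc zero_lt_one 0 (Set.left_mem_Icc.2 zero_le_one)).eq_deriv _
      h3.hasDerivWithinAt h4
  set v := x - y with hv
  have hexp : ⟪fderiv ℝ (gradient φ) y v, v⟫ = ∑ i, l i * ⟪b i, v⟫ ^ 2 := by
    rw [← b.sum_inner_mul_inner]
    refine Finset.sum_congr rfl fun i _ => ?_
    rw [br_symm h2, hb, inner_smul_right, real_inner_comm]; ring
  rw [hexp] at hz
  have hall := (Finset.sum_eq_zero_iff_of_nonneg
    (fun i _ => mul_nonneg (hl i).le (sq_nonneg ⟪b i, v⟫))).1 hz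
  have hv0 : v = 0 := by
    rw [← b.sum_repr' v]
    refine Finset.sum_eq_zero fun i hi => ?_
    have := hall i hi
    have h5 : ⟪b i, v⟫ = 0 := by
      rcases mul_eq_zero.1 this with h6 | h6
      · exact absurd h6 (hl i).ne'
      · exact pow_eq_zero_iff (two_ne_zero) |>.1 h6
    rw [h5, zero_smul]
  exact sub_eq_zero.1 hv0

lemma br_MA {d : ℕ} {V φ : EuclideanSpace ℝ (Fin d) → ℝ} (hV : Continuous V)
    (hφ : ContDiff ℝ (⊤ : ℕ∞) φ) (hc : ConvexOn ℝ Set.univ φ)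
    (hmap : Measure.map (gradient φ) (stdGaussian d) =
        (volume.withDensity fun x => ENNReal.ofReal (Real.exp (-V x))))
    (x : EuclideanSpace ℝ (Fin d)) :
    |(fderiv ℝ (gradient φ) x).det| * Real.exp (-V (gradient φ x)) =
      (2 * π) ^ (-(d : ℝ) / 2) * Real.exp (-‖x‖ ^ 2 / 2) := by
  set T := gradient φ with hT
  have hTc : Continuous T := (br_T_contDiff hφ).continuous
  have hHc : Continuous (fderiv ℝ T) := (br_H_contDiff hφ).continuous
  have hdetc : Continuous fun x => (fderiv ℝ T x).det :=
    ContinuousLinearMap.continuous_det.comp hHc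
  have hTd : ∀ x, HasFDerivAt T (fderiv ℝ T x) x := fun x =>
    ((br_T_contDiff hφ).differentiable (by simp) x).hasFDerivAt
  set ρ : EuclideanSpace ℝ (Fin d) → ℝ := fun x =>
    (2 * π) ^ (-(d : ℝ) / 2) * Real.exp (-‖x‖ ^ 2 / 2) with hρ
  have hρc : Continuous ρ := by rw [hρ]; fun_prop
  have hρpos : ∀ x, 0 < ρ x := fun x => by rw [hρ]; positivity
  set S0 := {x | (fderiv ℝ T x).det = 0} with hS0
  have hS0m : MeasurableSet S0 := (isClosed_eq hdetc continuous_const).measurableSet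
  have hsard : volume (T '' S0) = 0 :=
    addHaar_image_eq_zero_of_det_fderivWithin_eq_zero volume
      (fun x _ => (hTd x).hasFDerivWithinAt) (fun x hx => hx)
  have hγ0 : stdGaussian d S0 = 0 := by
    have h1 : (volume.withDensity fun x => ENNReal.ofReal (Real.exp (-V x))) (T '' S0) = 0 :=
      withDensity_absolutelyContinuous _ _ hsard
    rw [← hmap] at h1
    exact le_antisymm ((Measure.le_map_apply_image hTc.measurable.aemeasurable S0).trans h1.le)
      zero_le
  have hvol0 : volume S0 = 0 := by
    refine withDensity_absolutelyContinuous' (μ := volume) (f := fun x => ENNReal.ofReal (ρ x)) ?_ ?_ hγ0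
    · exact (hρc.measurable.ennreal_ofReal).aemeasurable
    · exact Filter.Eventually.of_forall fun x => by simpa using hρpos x
  have hae : (fun x => ENNReal.ofReal (ρ x)) =ᵐ[volume]
      (fun x => ENNReal.ofReal |(fderiv ℝ T x).det| * ENNReal.ofReal (Real.exp (-V (T x)))) := by
    refine ae_eq_of_forall_setLIntegral_eq_of_sigmaFinite hρc.measurable.ennreal_ofReal ?_ ?_
    · exact (hdetc.abs.measurable.ennreal_ofReal).mul
        ((Real.continuous_exp.comp (hV.comp hTc).neg).measurable.ennreal_ofReal)
    intro s hs _
    have hsP : (s \ S0 : Set _) =ᵐ[volume] s := sdiff_null_ae_eq_self hvol0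
    rw [← setLIntegral_congr hsP, ← setLIntegral_congr hsP]
    set A := s \ S0 with hA
    have hAm : MeasurableSet A := hs.diff hS0m
    have hinj : Set.InjOn T A := fun a _ b hb hab => br_inj hφ hc hb.2 hab
    have hpre : T ⁻¹' (T '' A) = A := by
      apply Set.Subset.antisymm _ (Set.subset_preimage_image T A)
      rintro z ⟨a, ha, haz⟩
      have := br_inj hφ hc ha.2 (haz.symm : T z = T a)
      rwa [this]
    have hd' : ∀ x ∈ A, HasFDerivWithinAt T (fderiv ℝ T x) A x := fun x _ => (hTd x).hasFDerivWithinAt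
    have him : MeasurableSet (T '' A) := measurable_image_of_fderivWithin hAm hd' hinj
    rw [← lintegral_image_eq_lintegral_abs_det_fderiv_mul volume hAm hd' hinj
      (fun y => ENNReal.ofReal (Real.exp (-V y))), ← withDensity_apply _ him, ← hmap,
      Measure.map_apply hTc.measurable him, hpre, stdGaussian, withDensity_apply _ hAm]
  have hae2 : ρ =ᵐ[volume] fun x => |(fderiv ℝ T x).det| * Real.exp (-V (T x)) := by
    filter_upwards [hae] with x hx
    rw [← ENNReal.ofReal_mul (abs_nonneg _)] at hx
    exact (ENNReal.ofReal_eq_ofReal_iff (hρpos x).le (by positivity)).1 hx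
  have := (Continuous.ae_eq_iff_eq volume hρc
    (hdetc.abs.mul (Real.continuous_exp.comp (hV.comp hTc).neg))).1 hae2
  exact (congrFun this x).symm

/-- Monge-Ampere equation in logarithmic form. -/
lemma br_MAlog {d : ℕ} {V φ : EuclideanSpace ℝ (Fin d) → ℝ} (hV : Continuous V)
    (hφ : ContDiff ℝ (⊤ : ℕ∞) φ) (hc : ConvexOn ℝ Set.univ φ)
    (hmap : Measure.map (gradient φ) (stdGaussian d) =
        (volume.withDensity fun x => ENNReal.ofReal (Real.exp (-V x)))) :
    ∃ κ : ℝ, ∀ x, 0 < (fderiv ℝ (gradient φ) x).det ∧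
      Real.log (fderiv ℝ (gradient φ) x).det = κ - ‖x‖ ^ 2 / 2 + V (gradient φ x) := by
  have h2 : ContDiff ℝ 2 φ := hφ.of_le br_two_le
  refine ⟨Real.log ((2 * π) ^ (-(d : ℝ) / 2)), fun x => ?_⟩
  have h := br_MA hV hφ hc hmap x
  have hp : (0:ℝ) < (2 * π) ^ (-(d : ℝ) / 2) := by positivity
  have hne : (fderiv ℝ (gradient φ) x).det ≠ 0 := by
    intro h0
    rw [h0, abs_zero, zero_mul] at h
    have : (0:ℝ) < (2 * π) ^ (-(d : ℝ) / 2) * Real.exp (-‖x‖ ^ 2 / 2) := by positivity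
    linarith
  obtain ⟨b, l, hl, -, hdet⟩ := br_eig _ (br_symm h2 x) (br_psd h2 hc x) hne
  have hpos : 0 < (fderiv ℝ (gradient φ) x).det := by
    rw [hdet]; exact Finset.prod_pos fun i _ => hl i
  refine ⟨hpos, ?_⟩
  have hlog := congrArg Real.log h
  rw [abs_of_pos hpos, Real.log_mul hpos.ne' (Real.exp_pos _).ne',
    Real.log_mul hp.ne' (Real.exp_pos _).ne', Real.log_exp, Real.log_exp] at hlog
  linarith

lemma br_homothety {d : ℕ} {a : ℝ} (ha : 0 < a) (c : EuclideanSpace ℝ (Fin d))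
    {s : Set (EuclideanSpace ℝ (Fin d))} (hs : MeasurableSet s)
    (F : EuclideanSpace ℝ (Fin d) → ℝ≥0∞) :
    MeasurableSet ((fun z => a • z + c) '' s) ∧
    ∫⁻ x in (fun z => a • z + c) '' s, F x = ENNReal.ofReal (a ^ d) * ∫⁻ z in s, F (a • z + c) := by
  have hd : ∀ x ∈ s, HasFDerivWithinAt (fun z : EuclideanSpace ℝ (Fin d) => a • z + c)
      (a • ContinuousLinearMap.id ℝ (EuclideanSpace ℝ (Fin d))) s x := by
    intro x _
    exact (((hasFDerivAt_id x).const_smul a).add_const c).hasFDerivWithinAt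
  have hinj : Set.InjOn (fun z : EuclideanSpace ℝ (Fin d) => a • z + c) s := by
    intro x _ y _ h
    exact smul_right_injective _ ha.ne' (add_right_cancel h)
  refine ⟨measurable_image_of_fderivWithin hs hd hinj, ?_⟩
  rw [lintegral_image_eq_lintegral_abs_det_fderiv_mul volume hs hd hinj]
  have hdet : (a • ContinuousLinearMap.id ℝ (EuclideanSpace ℝ (Fin d))).det = a ^ d := by
    have : (a • ContinuousLinearMap.id ℝ (EuclideanSpace ℝ (Fin d))).det
      = LinearMap.det (a • (LinearMap.id : EuclideanSpace ℝ (Fin d) →ₗ[ℝ] _)) := rfl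
    rw [this, LinearMap.det_smul]; simp
  rw [hdet, abs_of_pos (pow_pos ha d), lintegral_const_mul' _ _ ENNReal.ofReal_ne_top]

lemma br_cheb {d : ℕ} {μ : Measure (EuclideanSpace ℝ (Fin d))} [IsProbabilityMeasure μ]
    (hiso : IsIsotropic μ) {s : ℝ} (hs : 0 < s) : s ^ 2 * μ.real {y | s ≤ ‖y‖} ≤ d := by
  have hIntg : ∀ i : Fin d, Integrable (fun x : EuclideanSpace ℝ (Fin d) => x i * x i) μ := by
    intro i
    have := hiso i i
    rw [if_pos rfl] at this
    exact integrable_of_integral_eq_one this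
  have hn : ∀ x : EuclideanSpace ℝ (Fin d), ‖x‖ ^ 2 = ∑ i, x i * x i := by
    intro x
    rw [EuclideanSpace.real_norm_sq_eq]
    exact Finset.sum_congr rfl fun i _ => by ring
  have hI : ∫ x, ‖x‖ ^ 2 ∂μ = d := by
    simp_rw [hn]
    rw [integral_finsetSum _ fun i _ => hIntg i]
    simp [fun i => hiso i i]
  have hInt : Integrable (fun x : EuclideanSpace ℝ (Fin d) => ‖x‖ ^ 2) μ := by
    simp_rw [hn]
    exact integrable_finsetSum _ fun i _ => hIntg i
  have := mul_meas_ge_le_integral_of_nonneg (μ := μ)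
    (Filter.Eventually.of_forall fun x : EuclideanSpace ℝ (Fin d) => sq_nonneg ‖x‖) hInt (s ^ 2)
  rw [hI] at this
  have hset : {x : EuclideanSpace ℝ (Fin d) | s ^ 2 ≤ ‖x‖ ^ 2} = {y | s ≤ ‖y‖} := by
    ext x; simp only [Set.mem_ofPred_eq]
    exact pow_le_pow_iff_left₀ hs.le (norm_nonneg _) two_ne_zero
  rwa [hset] at this

/-- Universal pointwise decay of an isotropic log-concave density. -/
lemma br_decay {d : ℕ} (hd : 1 ≤ d) {V : EuclideanSpace ℝ (Fin d) → ℝ} (hV : Continuous V)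
    (hc : ConvexOn ℝ Set.univ V)
    [hμ : IsProbabilityMeasure (volume.withDensity fun x => ENNReal.ofReal (Real.exp (-V x)))]
    (hiso : IsIsotropic (volume.withDensity fun x => ENNReal.ofReal (Real.exp (-V x)))) :
    ∃ y₀ : EuclideanSpace ℝ (Fin d), ‖y₀‖ ≤ 2 * √d ∧
      ∀ y : EuclideanSpace ℝ (Fin d), 10 * (d * √d) ≤ ‖y‖ → V y₀ + ‖y‖ / (5 * √d) ≤ V y := by
  set μ := (volume.withDensity fun x : EuclideanSpace ℝ (Fin d) => ENNReal.ofReal (Real.exp (-V x)))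
    with hμdef
  have hd' : (1:ℝ) ≤ d := by exact_mod_cast hd
  have hsq : 1 ≤ √(d:ℝ) := Real.one_le_sqrt.2 hd'
  have hsq2 : √(d:ℝ) ^ 2 = d := Real.sq_sqrt (by positivity)
  set B := Metric.closedBall (0 : EuclideanSpace ℝ (Fin d)) (2 * √d) with hB
  have hBm : MeasurableSet B := Metric.isClosed_closedBall.measurableSet
  obtain ⟨y₀, hy₀, hmin⟩ := (isCompact_closedBall (0 : EuclideanSpace ℝ (Fin d)) (2 * √d)).exists_isMinOn
    ⟨0, by simp⟩ hV.continuousOn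
  have hmB : (3:ℝ)/4 ≤ μ.real B := by
    have h1 := br_cheb (μ := μ) hiso (s := 2 * √d) (by positivity)
    have h2 : μ.real Bᶜ ≤ μ.real {y | 2 * √d ≤ ‖y‖} := by
      refine measureReal_mono ?_ (measure_ne_top μ _)
      intro y hy
      simp [hB] at hy
      exact hy.le
    rw [probReal_compl_eq_one_sub hBm] at h2
    rw [mul_pow, hsq2] at h1
    have h3 : μ.real {y | 2 * √d ≤ ‖y‖} ≤ 1/4 := by
      by_contra hcon
      push Not at hcon
      nlinarith
    linarith
  refine ⟨y₀, by simpa using hy₀, fun y hy => ?_⟩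
  have hypos : 0 < ‖y‖ := lt_of_lt_of_le (by positivity) hy
  set lam := 5 * √d / ‖y‖ with hlam
  have hlpos : 0 < lam := by positivity
  have hl2 : lam * d ≤ 1/2 := by
    rw [hlam, div_mul_eq_mul_div, div_le_iff₀ hypos]; nlinarith
  have hl3 : lam ≤ 1/2 := by nlinarith
  have hly : lam * ‖y‖ = 5 * √d := by rw [hlam]; field_simp
  obtain ⟨hgm, hgi⟩ := br_homothety (a := 1 - lam) (by linarith) (lam • y) hBm
    (fun x => ENNReal.ofReal (Real.exp (-V x)))
  set G := (fun z => (1 - lam) • z + lam • y) '' B with hG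
  have hup : μ.real G ≤ 1/9 := by
    have h1 := br_cheb (μ := μ) hiso (s := 3 * √d) (by positivity)
    have h2 : μ.real G ≤ μ.real {y | 3 * √d ≤ ‖y‖} := by
      refine measureReal_mono ?_ (measure_ne_top μ _)
      rintro _ ⟨z, hz, rfl⟩
      have hz' : ‖z‖ ≤ 2 * √d := by simpa [hB] using hz
      simp only [Set.mem_ofPred_eq]
      have h3 : ‖lam • y‖ ≤ ‖(1 - lam) • z + lam • y‖ + ‖(1 - lam) • z‖ := by
        have := norm_sub_le ((1 - lam) • z + lam • y) ((1 - lam) • z)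
        simpa using this
      rw [norm_smul, norm_smul, Real.norm_of_nonneg hlpos.le, Real.norm_of_nonneg (by linarith), hly] at h3
      nlinarith [norm_nonneg z]
    rw [mul_pow, hsq2] at h1
    by_contra hcon
    push Not at hcon
    nlinarith
  have hlow : (1 - lam) ^ d * Real.exp (lam * (V y₀ - V y)) * μ.real B ≤ μ.real G := by
    have h1 : ENNReal.ofReal ((1 - lam) ^ d * Real.exp (lam * (V y₀ - V y))) * μ B ≤ μ G := by
      rw [hμdef, withDensity_apply _ hgm, hgi, withDensity_apply _ hBm,
        ENNReal.ofReal_mul (pow_nonneg (by linarith) d), mul_assoc]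
      refine mul_le_mul' le_rfl ?_
      rw [← lintegral_const_mul' _ _ ENNReal.ofReal_ne_top]
      refine setLIntegral_mono' hBm fun z hz => ?_
      rw [← ENNReal.ofReal_mul (Real.exp_pos _).le, ← Real.exp_add]
      apply ENNReal.ofReal_le_ofReal
      apply Real.exp_le_exp.2
      have h2 := hc.2 (Set.mem_univ z) (Set.mem_univ y) (by linarith : 0 ≤ 1 - lam) hlpos.le (by ring)
      have h3 : V y₀ ≤ V z := hmin hz
      simp only [smul_eq_mul] at h2
      nlinarith
    have h2 := ENNReal.toReal_mono (measure_ne_top μ G) h1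
    rw [ENNReal.toReal_mul, ENNReal.toReal_ofReal
      (mul_nonneg (pow_nonneg (by linarith) d) (Real.exp_pos _).le)] at h2
    exact h2
  have hbern : (1:ℝ)/2 ≤ (1 - lam) ^ d := by
    have := one_add_mul_le_pow (a := -lam) (by linarith) d
    have h2 : (1 + -lam) ^ d = (1 - lam) ^ d := by ring
    nlinarith
  set e := Real.exp (lam * (V y₀ - V y)) with he
  have hepos : 0 < e := Real.exp_pos _
  have h5 : e ≤ 8/27 := by
    have : 1/2 * e * (3/4) ≤ (1 - lam) ^ d * e * μ.real B := by gcongr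
    linarith
  have h6 : e ≤ Real.exp (-1) := by
    refine h5.trans ?_
    rw [Real.exp_neg, le_inv_comm₀ (by norm_num) (Real.exp_pos 1)]
    have := Real.exp_one_lt_d9
    norm_num; linarith
  have h7 := Real.exp_le_exp.1 h6
  have h8 : ‖y‖ / (5 * √d) = 1 / lam := by rw [hlam]; field_simp
  rw [h8]
  have h9 : 1 / lam ≤ V y - V y₀ := by
    rw [div_le_iff₀ hlpos]; nlinarith
  linarith

/-- Universal tail bound. -/
lemma br_tail {d : ℕ} (hd : 1 ≤ d) {V : EuclideanSpace ℝ (Fin d) → ℝ} (hV : Continuous V)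
    (hc : ConvexOn ℝ Set.univ V)
    [hμ : IsProbabilityMeasure (volume.withDensity fun x => ENNReal.ofReal (Real.exp (-V x)))]
    (hiso : IsIsotropic (volume.withDensity fun x => ENNReal.ofReal (Real.exp (-V x))))
    {t : ℝ} (ht : 22 * (d * √d) ≤ t) :
    (volume.withDensity fun x : EuclideanSpace ℝ (Fin d) => ENNReal.ofReal (Real.exp (-V x))).real
      {y | t ≤ ‖y‖} ≤ 2 ^ d * Real.exp (-((t - 2 * √d) / (10 * √d))) := by
  obtain ⟨y₀, hy₀, hdec⟩ := br_decay hd hV hc hiso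
  set μ := (volume.withDensity fun x : EuclideanSpace ℝ (Fin d) => ENNReal.ofReal (Real.exp (-V x)))
    with hμdef
  have hd' : (1:ℝ) ≤ d := by exact_mod_cast hd
  have hsq : 1 ≤ √(d:ℝ) := Real.one_le_sqrt.2 hd'
  set s := {z : EuclideanSpace ℝ (Fin d) | t ≤ ‖(2:ℝ) • z + -y₀‖} with hs
  have hsm : MeasurableSet s := by
    apply IsClosed.measurableSet
    exact isClosed_le continuous_const (by fun_prop)
  have him : (fun z => (2:ℝ) • z + -y₀) '' s = {y | t ≤ ‖y‖} := by
    ext y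
    constructor
    · rintro ⟨z, hz, rfl⟩; exact hz
    · intro hy
      have : (2:ℝ) • ((2:ℝ)⁻¹ • (y + y₀)) + -y₀ = y := by
        rw [smul_smul]; norm_num
      refine ⟨(2:ℝ)⁻¹ • (y + y₀), ?_, this⟩
      rw [hs, Set.mem_ofPred_eq, this]; exact hy
  obtain ⟨hgm, hgi⟩ := br_homothety (a := 2) (by norm_num) (-y₀) hsm
    (fun x => ENNReal.ofReal (Real.exp (-V x)))
  rw [him] at hgm hgi
  have h1 : μ {y | t ≤ ‖y‖} ≤ ENNReal.ofReal (2 ^ d * Real.exp (-((t - 2 * √d) / (10 * √d)))) * μ s := by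
    rw [hμdef, withDensity_apply _ hgm, hgi, withDensity_apply _ hsm,
        ENNReal.ofReal_mul (by positivity), mul_assoc]
    refine mul_le_mul' le_rfl ?_
    rw [← lintegral_const_mul' _ _ ENNReal.ofReal_ne_top]
    refine setLIntegral_mono' hsm fun z hz => ?_
    rw [← ENNReal.ofReal_mul (Real.exp_pos _).le, ← Real.exp_add]
    apply ENNReal.ofReal_le_ofReal
    apply Real.exp_le_exp.2
    have h2 := hc.2 (Set.mem_univ ((2:ℝ) • z + -y₀)) (Set.mem_univ y₀) (by norm_num : (0:ℝ) ≤ 1/2)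
      (by norm_num : (0:ℝ) ≤ 1/2) (by norm_num)
    have h3 : (1/2:ℝ) • ((2:ℝ) • z + -y₀) + (1/2:ℝ) • y₀ = z := by
      rw [smul_add, smul_smul]; norm_num
    rw [h3] at h2
    simp only [smul_eq_mul] at h2
    have h4 : t ≤ 2 * ‖z‖ + 2 * √d := by
      have h5 := norm_add_le ((2:ℝ) • z) (-y₀)
      rw [norm_neg, norm_smul, Real.norm_of_nonneg (by norm_num)] at h5
      have h6 : t ≤ ‖(2:ℝ) • z + -y₀‖ := hz
      linarith
    have h5 := hdec z (by nlinarith)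
    have h6 : (t - 2 * √d) / (10 * √d) ≤ ‖z‖ / (5 * √d) := by
      rw [div_le_div_iff₀ (by positivity) (by positivity)]; nlinarith
    linarith
  have h2 : μ {y | t ≤ ‖y‖} ≤ ENNReal.ofReal (2 ^ d * Real.exp (-((t - 2 * √d) / (10 * √d)))) :=
    h1.trans (mul_le_of_le_one_right' prob_le_one)
  exact ENNReal.toReal_le_of_le_ofReal (by positivity) h2

lemma br_V_convex {d : ℕ} {V : EuclideanSpace ℝ (Fin d) → ℝ} (hV : ContDiff ℝ 2 V)
    (h : ∀ x v, 0 ≤ iteratedFDeriv ℝ 2 V x ![v, v]) : ConvexOn ℝ Set.univ V := by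
  have hf : ∀ y p, V y + ⟪gradient V y, p⟫ ≤ V (y + p) := by
    intro y p
    have := br_V_lower hV (m := 0) y p fun s _ => h _ _
    linarith
  refine ⟨convex_univ, fun x _ y _ a b ha hb hab => ?_⟩
  set z := a • x + b • y with hz
  have h1 := hf z (x - z)
  have h2 := hf z (y - z)
  rw [add_sub_cancel] at h1 h2
  have h3 : a * ⟪gradient V z, x - z⟫ + b * ⟪gradient V z, y - z⟫ = 0 := by
    rw [← inner_smul_right, ← inner_smul_right, ← inner_add_right]
    have : a • (x - z) + b • (y - z) = 0 := by
      have h4 : a • (x - z) + b • (y - z) = a • x + b • y - (a + b) • z := by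
        rw [smul_sub, smul_sub, add_smul]; abel
      rw [h4, hab, one_smul, ← hz, sub_self]
    rw [this, inner_zero_right]
  simp only [smul_eq_mul]
  have h4 : V z = a * V z + b * V z := by rw [← add_mul, hab, one_mul]
  nlinarith [mul_le_mul_of_nonneg_left h1 ha, mul_le_mul_of_nonneg_left h2 hb]

lemma br_far {E : Type*} [NormedAddCommGroup E] [InnerProductSpace ℝ E] {x p z q : E}
    (hp : p ≠ 0) {ρ : ℝ} (hρ : 0 < ρ) (hm : 0 ≤ ⟪q - p, z - x⟫)
    (hz : ‖z - (x + (ρ / ‖p‖) • p)‖ ≤ ρ / 2) : ‖p‖ / 3 ≤ ‖q‖ := by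
  have hp' : 0 < ‖p‖ := norm_pos_iff.2 hp
  set u := z - (x + (ρ / ‖p‖) • p) with hu
  have hzx : z - x = u + (ρ / ‖p‖) • p := by rw [hu]; abel
  have hn : ‖(ρ / ‖p‖) • p‖ = ρ := by
    rw [norm_smul, Real.norm_of_nonneg (by positivity)]; field_simp
  have h1 : ‖z - x‖ ≤ 3 * ρ / 2 := by
    rw [hzx]; have := norm_add_le u ((ρ / ‖p‖) • p); linarith
  have h2 : ⟪p, z - x⟫ ≥ ρ * ‖p‖ / 2 := by
    rw [hzx, inner_add_right, inner_smul_right, real_inner_self_eq_norm_sq]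
    have h3 := neg_le_of_abs_le (abs_real_inner_le_norm p u)
    have h4 : ρ / ‖p‖ * ‖p‖ ^ 2 = ρ * ‖p‖ := by field_simp
    rw [h4]; nlinarith
  have h3 : ⟪q, z - x⟫ ≤ ‖q‖ * (3 * ρ / 2) :=
    (real_inner_le_norm _ _).trans (by gcongr)
  rw [inner_sub_left] at hm
  have : ρ * (‖p‖ / 3) ≤ ρ * ‖q‖ := by linarith
  exact le_of_mul_le_mul_left this hρ

lemma br_vol {d : ℕ} (a : EuclideanSpace ℝ (Fin d)) :
    ENNReal.ofReal (4 ^ d) ≤ volume (Metric.closedBall a (2 * √d)) := by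
  have h := (PiLp.volume_preserving_ofLp (Fin d)).measure_preimage
    (measurableSet_Icc (a := fun i => a i - 2) (b := fun i => a i + 2)).nullMeasurableSet
  rw [Real.volume_Icc_pi] at h
  have h2 : ∏ i : Fin d, ENNReal.ofReal ((a i + 2) - (a i - 2)) = ENNReal.ofReal (4 ^ d) := by
    have : ∀ i : Fin d, (a i + 2) - (a i - 2) = 4 := fun i => by ring
    simp_rw [this]
    rw [Finset.prod_const, Finset.card_univ, Fintype.card_fin, ENNReal.ofReal_pow (by norm_num)]
  rw [h2] at h
  rw [← h]
  refine measure_mono fun z hz => ?_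
  rw [Metric.mem_closedBall, dist_eq_norm, EuclideanSpace.norm_eq]
  have h3 : 2 * √(d:ℝ) = √(4 * d) := by
    rw [Real.sqrt_mul (by norm_num)]
    congr 1
    rw [show (4:ℝ) = 2 ^ 2 by norm_num, Real.sqrt_sq (by norm_num)]
  rw [h3]
  apply Real.sqrt_le_sqrt
  have : ∀ i ∈ (Finset.univ : Finset (Fin d)), ‖(z - a) i‖ ^ 2 ≤ 4 := by
    intro i _
    have h4 := hz.1 i
    have h5 := hz.2 i
    simp only [PiLp.sub_apply, Real.norm_eq_abs, sq_abs] at *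
    nlinarith
  refine (Finset.sum_le_card_nsmul _ _ _ this).trans ?_
  simp [mul_comm]

lemma br_gauss_ball {d : ℕ} (a : EuclideanSpace ℝ (Fin d)) :
    ENNReal.ofReal (Real.exp (-(‖a‖ + 2 * √d) ^ 2 / 2)) ≤
      stdGaussian d (Metric.closedBall a (2 * √d)) := by
  have hm : MeasurableSet (Metric.closedBall a (2 * √d)) := Metric.isClosed_closedBall.measurableSet
  rw [stdGaussian, withDensity_apply _ hm]
  set c : ℝ := (2 * π) ^ (-(d : ℝ) / 2) with hc
  have hcpos : 0 < c := by positivity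
  set e := Real.exp (-(‖a‖ + 2 * √d) ^ 2 / 2) with he
  have hce : 1 ≤ c * 4 ^ d := by
    have h1 : (4:ℝ) ^ d = 16 ^ ((d:ℝ)/2) := by
      rw [show (16:ℝ) = 4 ^ (2:ℝ) by norm_num, ← Real.rpow_mul (by norm_num),
        show (2:ℝ) * (d/2) = d by ring, Real.rpow_natCast]
    have h2 : (2 * π) ^ ((d:ℝ)/2) ≤ 16 ^ ((d:ℝ)/2) := by
      apply Real.rpow_le_rpow (by positivity) _ (by positivity)
      have := Real.pi_lt_four; linarith
    have h3 : c = ((2 * π) ^ ((d:ℝ)/2))⁻¹ := by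
      rw [hc, ← Real.rpow_neg (by positivity)]; congr 1; ring
    rw [h3, h1, inv_mul_eq_div, le_div_iff₀ (by positivity)]; linarith
  calc ENNReal.ofReal e ≤ ENNReal.ofReal (c * e) * ENNReal.ofReal (4 ^ d) := by
        rw [← ENNReal.ofReal_mul (by positivity)]
        apply ENNReal.ofReal_le_ofReal
        have : 0 < e := Real.exp_pos _
        nlinarith
    _ ≤ ENNReal.ofReal (c * e) * volume (Metric.closedBall a (2 * √d)) :=
        mul_le_mul' le_rfl (br_vol a)
    _ ≤ _ := by
        rw [← setLIntegral_const]
        refine setLIntegral_mono' hm fun z hz => ?_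
        apply ENNReal.ofReal_le_ofReal
        apply mul_le_mul_of_nonneg_left _ hcpos.le
        apply Real.exp_le_exp.2
        rw [Metric.mem_closedBall, dist_eq_norm] at hz
        have h1 : ‖z‖ ≤ ‖a‖ + 2 * √d := by
          have := norm_add_le (z - a) a
          rw [sub_add_cancel] at this; linarith
        have := pow_le_pow_left₀ (norm_nonneg z) h1 2
        linarith

lemma br_gauss_prob {d : ℕ} {V φ : EuclideanSpace ℝ (Fin d) → ℝ}
    (hT : Measurable (gradient φ))
    [hμ : IsProbabilityMeasure (volume.withDensity fun x => ENNReal.ofReal (Real.exp (-V x)))]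
    (hmap : Measure.map (gradient φ) (stdGaussian d) =
        (volume.withDensity fun x => ENNReal.ofReal (Real.exp (-V x)))) :
    IsProbabilityMeasure (stdGaussian d) := by
  constructor
  have := hμ.measure_univ
  rwa [← hmap, Measure.map_apply hT MeasurableSet.univ, Set.preimage_univ] at this

/-- Universal growth of the Brenier map. -/
lemma br_growth {d : ℕ} (hd : 1 ≤ d) {V φ : EuclideanSpace ℝ (Fin d) → ℝ} (hV : Continuous V)
    (hVc : ConvexOn ℝ Set.univ V)
    (hφ : ContDiff ℝ (⊤ : ℕ∞) φ) (hc : ConvexOn ℝ Set.univ φ)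
    [hμ : IsProbabilityMeasure (volume.withDensity fun x => ENNReal.ofReal (Real.exp (-V x)))]
    (hiso : IsIsotropic (volume.withDensity fun x => ENNReal.ofReal (Real.exp (-V x))))
    (hmap : Measure.map (gradient φ) (stdGaussian d) =
        (volume.withDensity fun x => ENNReal.ofReal (Real.exp (-V x))))
    (x : EuclideanSpace ℝ (Fin d)) :
    ‖gradient φ x‖ ≤ 1200 * √d * (d + ‖x‖ ^ 2) := by
  have hd' : (1:ℝ) ≤ d := by exact_mod_cast hd
  have hsq : 1 ≤ √(d:ℝ) := Real.one_le_sqrt.2 hd'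
  have hsq2 : √(d:ℝ) ^ 2 = d := Real.sq_sqrt (by positivity)
  have hdφ : Differentiable ℝ φ := hφ.differentiable (by simp)
  have hT : Measurable (gradient φ) := (br_T_contDiff hφ).continuous.measurable
  set p := gradient φ x with hp
  by_cases hcase : ‖p‖ / 3 < 22 * (d * √d)
  · have : 0 ≤ √(d:ℝ) * ‖x‖ ^ 2 := by positivity
    nlinarith
  push Not at hcase
  have hp0 : p ≠ 0 := by
    rw [← norm_pos_iff]
    have : 0 < 22 * (d * √(d:ℝ)) := by positivity
    linarith
  have htail := br_tail hd hV hVc hiso hcase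
  have hms : MeasurableSet {y : EuclideanSpace ℝ (Fin d) | ‖p‖ / 3 ≤ ‖y‖} :=
    (isClosed_le continuous_const continuous_norm).measurableSet
  have hlow := br_gauss_ball (x + ((4 * √d) / ‖p‖) • p)
  have hsub : Metric.closedBall (x + ((4 * √d) / ‖p‖) • p) (2 * √d) ⊆
      gradient φ ⁻¹' {y : EuclideanSpace ℝ (Fin d) | ‖p‖ / 3 ≤ ‖y‖} := by
    intro z hz
    rw [Metric.mem_closedBall, dist_eq_norm] at hz
    exact br_far hp0 (by positivity) (br_mono hdφ hc x z) (hz.trans (by linarith))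
  have h1 := hlow.trans (measure_mono hsub)
  rw [← Measure.map_apply hT hms, hmap] at h1
  have h2 := ENNReal.toReal_mono (measure_ne_top _ _) h1
  rw [ENNReal.toReal_ofReal (Real.exp_pos _).le] at h2
  have h3 := h2.trans htail
  have h4 : (2:ℝ) ^ d ≤ Real.exp d := by
    rw [← Real.exp_one_pow]
    apply pow_le_pow_left₀ (by norm_num)
    have := Real.add_one_le_exp (1:ℝ); linarith
  have h5 := h3.trans (mul_le_mul_of_nonneg_right h4 (Real.exp_pos _).le)
  rw [← Real.exp_add] at h5
  have h6 := Real.exp_le_exp.1 h5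
  have hn : ‖((4 * √d) / ‖p‖) • p‖ = 4 * √d := by
    have : 0 < ‖p‖ := norm_pos_iff.2 hp0
    rw [norm_smul, Real.norm_of_nonneg (by positivity)]; field_simp
  have h7 : ‖x + ((4 * √d) / ‖p‖) • p‖ + 2 * √d ≤ ‖x‖ + 6 * √d := by
    have := norm_add_le x (((4 * √d) / ‖p‖) • p); linarith
  have h8 := pow_le_pow_left₀ (by positivity) h7 2
  have h9 : (‖x‖ + 6 * √d) ^ 2 ≤ 2 * ‖x‖ ^ 2 + 72 * d := by
    nlinarith [sq_nonneg (‖x‖ - 6 * √d)]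
  have h10 : (‖p‖ / 3 - 2 * √d) / (10 * √d) ≤ 37 * d + ‖x‖ ^ 2 := by linarith
  rw [div_le_iff₀ (by positivity)] at h10
  have : 0 ≤ √(d:ℝ) * ‖x‖ ^ 2 := by positivity
  nlinarith

lemma br_gauss_tail (d : ℕ) : ∃ M : ℝ, 0 < M ∧ ∀ s : ℝ, 0 ≤ s →
    stdGaussian d {z | s ≤ ‖z‖} ≤ ENNReal.ofReal (M * Real.exp (-s ^ 2 / 4)) := by
  set c : ℝ := (2 * π) ^ (-(d : ℝ) / 2) with hc
  have hcpos : 0 < c := by positivity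
  have hval := GaussianFourier.integral_rexp_neg_mul_sq_norm (V := EuclideanSpace ℝ (Fin d))
    (b := 1/4) (by norm_num)
  set I := ∫ v : EuclideanSpace ℝ (Fin d), Real.exp (-(1/4) * ‖v‖ ^ 2) with hI
  have hIpos : 0 < I := by rw [hval]; positivity
  have hIntg : Integrable (fun v : EuclideanSpace ℝ (Fin d) => Real.exp (-(1/4) * ‖v‖ ^ 2)) := by
    by_contra hcon
    rw [hI, integral_undef hcon] at hIpos
    exact lt_irrefl _ hIpos
  refine ⟨c * I, by positivity, fun s hs => ?_⟩
  have hms : MeasurableSet {y : EuclideanSpace ℝ (Fin d) | s ≤ ‖y‖} :=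
    (isClosed_le continuous_const continuous_norm).measurableSet
  rw [stdGaussian, withDensity_apply _ hms]
  calc _ ≤ ∫⁻ v in {y : EuclideanSpace ℝ (Fin d) | s ≤ ‖y‖}, ENNReal.ofReal (c * Real.exp (-s ^ 2 / 4)) *
          ENNReal.ofReal (Real.exp (-(1/4) * ‖v‖ ^ 2)) := by
        refine setLIntegral_mono' hms fun z hz => ?_
        rw [← ENNReal.ofReal_mul (by positivity)]
        apply ENNReal.ofReal_le_ofReal
        rw [mul_assoc, ← Real.exp_add]
        apply mul_le_mul_of_nonneg_left _ hcpos.le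
        apply Real.exp_le_exp.2
        have := pow_le_pow_left₀ hs hz 2
        linarith
    _ ≤ ∫⁻ v : EuclideanSpace ℝ (Fin d), ENNReal.ofReal (c * Real.exp (-s ^ 2 / 4)) *
          ENNReal.ofReal (Real.exp (-(1/4) * ‖v‖ ^ 2)) := setLIntegral_le_lintegral _ _
    _ = _ := by
        rw [lintegral_const_mul' _ _ ENNReal.ofReal_ne_top,
          ← ofReal_integral_eq_lintegral_ofReal hIntg
            (Filter.Eventually.of_forall fun _ => (Real.exp_pos _).le),
          ← ENNReal.ofReal_mul (by positivity)]
        congr 1; rw [← hI]; ring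

lemma br_V_upper {d : ℕ} {V : EuclideanSpace ℝ (Fin d) → ℝ} {c₁ : ℝ} (hc1 : 0 < c₁)
    (hV : ContDiff ℝ 2 V)
    (h : ∀ x v, iteratedFDeriv ℝ 2 V x ![v, v] ≤ c₁ * ‖v‖ ^ 2) :
    ∃ M : ℝ, 0 < M ∧ ∀ y, V y ≤ M * (1 + ‖y‖) ^ 2 := by
  refine ⟨|V 0| + ‖gradient (-V) 0‖ + c₁, by positivity, fun y => ?_⟩
  have h1 := br_V_lower hV.neg (m := - (c₁ * ‖y‖ ^ 2)) 0 y fun s _ => by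
    have h2 := h (0 + s • y) y
    have h3 : iteratedFDeriv ℝ 2 (fun x => -V x) (0 + s • y) = - iteratedFDeriv ℝ 2 V (0 + s • y) :=
      iteratedFDeriv_neg_apply
    rw [h3]
    simp only [neg_apply]
    linarith
  have h2 := neg_le_of_abs_le (abs_real_inner_le_norm (gradient (fun x => -V x) 0) y)
  have h3 : gradient (fun x => -V x) 0 = gradient (-V) 0 := rfl
  rw [h3] at h1 h2
  rw [zero_add] at h1
  have h4 := le_abs_self (V 0)
  have h5 := abs_nonneg (V 0)
  have h6 := norm_nonneg y
  have h7 := norm_nonneg (gradient (-V) 0)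
  nlinarith [mul_nonneg h5 h6, mul_nonneg h7 h6, mul_nonneg h5 (sq_nonneg ‖y‖),
    mul_nonneg h7 (sq_nonneg ‖y‖), mul_nonneg hc1.le h6, mul_nonneg hc1.le (sq_nonneg ‖y‖)]

/-- Qualitative lower growth of the Brenier map. -/
lemma br_lower_growth {d : ℕ} {V φ : EuclideanSpace ℝ (Fin d) → ℝ} {c₁ : ℝ} (hc1 : 0 < c₁)
    (hV : ContDiff ℝ 2 V)
    (hφ : ContDiff ℝ (⊤ : ℕ∞) φ) (hc : ConvexOn ℝ Set.univ φ)
    (hmap : Measure.map (gradient φ) (stdGaussian d) =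
        (volume.withDensity fun x => ENNReal.ofReal (Real.exp (-V x))))
    (h : ∀ x v, iteratedFDeriv ℝ 2 V x ![v, v] ≤ c₁ * ‖v‖ ^ 2) :
    ∃ C : ℝ, 0 < C ∧ ∀ x, ‖x‖ ≤ C * (1 + ‖gradient φ x‖) := by
  obtain ⟨M, hM, hVu⟩ := br_V_upper hc1 hV h
  obtain ⟨N, hN, hG⟩ := br_gauss_tail d
  have hdφ : Differentiable ℝ φ := hφ.differentiable (by simp)
  have hT : Measurable (gradient φ) := (br_T_contDiff hφ).continuous.measurable
  set κ := volume.real (Metric.closedBall (0 : EuclideanSpace ℝ (Fin d)) (1/2)) with hκ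
  have hκpos : 0 < κ := ENNReal.toReal_pos
    (Metric.measure_closedBall_pos volume _ (by norm_num)).ne' measure_closedBall_lt_top.ne
  set L := |Real.log (N / κ)| + 9 * M with hL
  have hLpos : 0 < L := by positivity
  refine ⟨6 * √L, by positivity, fun x => ?_⟩
  set y := gradient φ x with hy
  by_cases hx : x = 0
  · subst hx; rw [norm_zero]; positivity
  set b := Metric.closedBall (y + (1 / ‖x‖) • x) (1/2) with hb
  have hbm : MeasurableSet b := Metric.isClosed_closedBall.measurableSet
  have hsub : gradient φ ⁻¹' b ⊆ {z | ‖x‖ / 3 ≤ ‖z‖} := by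
    intro z hz
    have hz' : gradient φ z ∈ b := hz
    rw [hb, Metric.mem_closedBall, dist_eq_norm] at hz'
    refine br_far (x := y) (z := gradient φ z) (ρ := 1) hx one_pos ?_ hz'
    rw [real_inner_comm]; exact br_mono hdφ hc x z
  have h1 := (measure_mono hsub).trans (hG (‖x‖ / 3) (by positivity))
  rw [← Measure.map_apply hT hbm, hmap, withDensity_apply _ hbm] at h1
  have h2 : ENNReal.ofReal (Real.exp (-(9 * M * (1 + ‖y‖) ^ 2)) * κ) ≤
      ∫⁻ z in b, ENNReal.ofReal (Real.exp (-V z)) := by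
    have hvb : volume b = ENNReal.ofReal κ := by
      rw [hκ, Measure.real, ENNReal.ofReal_toReal measure_closedBall_lt_top.ne, hb]
      exact Measure.addHaar_closedBall_center _ _ _
    rw [ENNReal.ofReal_mul (Real.exp_pos _).le, ← hvb, ← setLIntegral_const]
    refine setLIntegral_mono' hbm fun z hz => ?_
    apply ENNReal.ofReal_le_ofReal
    apply Real.exp_le_exp.2
    rw [hb, Metric.mem_closedBall, dist_eq_norm] at hz
    have hxn : 0 < ‖x‖ := norm_pos_iff.2 hx
    have hn : ‖(1 / ‖x‖) • x‖ = 1 := by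
      rw [norm_smul, Real.norm_of_nonneg (by positivity)]; field_simp
    have h3 : ‖z‖ ≤ ‖y‖ + 3/2 := by
      have h4 := norm_add_le (z - (y + (1 / ‖x‖) • x)) (y + (1 / ‖x‖) • x)
      have h5 := norm_add_le y ((1 / ‖x‖) • x)
      rw [sub_add_cancel] at h4; linarith
    have h4 := hVu z
    have h5 : (1 + ‖z‖) ^ 2 ≤ 9 * (1 + ‖y‖) ^ 2 := by
      have := pow_le_pow_left₀ (by positivity) (show 1 + ‖z‖ ≤ 3 * (1 + ‖y‖) by
        have := norm_nonneg y; linarith) 2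
      linarith
    nlinarith
  have h3 := h2.trans h1
  rw [ENNReal.ofReal_le_ofReal_iff (by positivity)] at h3
  have h4 : Real.exp (-(9 * M * (1 + ‖y‖) ^ 2)) ≤
      Real.exp (Real.log (N / κ) + -(‖x‖ / 3) ^ 2 / 4) := by
    rw [Real.exp_add, Real.exp_log (by positivity), div_mul_eq_mul_div, le_div_iff₀ hκpos]
    exact h3
  have h5 := Real.exp_le_exp.1 h4
  have h6 : ‖x‖ ^ 2 ≤ (6 * √L * (1 + ‖y‖)) ^ 2 := by
    rw [mul_pow, mul_pow, Real.sq_sqrt hLpos.le]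
    have h7 := le_abs_self (Real.log (N / κ))
    have h8 := abs_nonneg (Real.log (N / κ))
    have h9 : 1 ≤ (1 + ‖y‖) ^ 2 := one_le_pow₀ (by have := norm_nonneg y; linarith)
    rw [hL]
    nlinarith
  exact (pow_le_pow_iff_left₀ (norm_nonneg _) (by positivity) two_ne_zero).1 h6

lemma br_dense {d : ℕ} {V φ : EuclideanSpace ℝ (Fin d) → ℝ} (hV : Continuous V)
    (hφ : ContDiff ℝ (⊤ : ℕ∞) φ)
    (hmap : Measure.map (gradient φ) (stdGaussian d) =
        (volume.withDensity fun x => ENNReal.ofReal (Real.exp (-V x))))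
    (v : EuclideanSpace ℝ (Fin d)) {r : ℝ} (hr : 0 < r) : ∃ p, ‖gradient φ p - v‖ < r := by
  have hT : Measurable (gradient φ) := (br_T_contDiff hφ).continuous.measurable
  by_contra hcon
  push Not at hcon
  have hm : MeasurableSet (Metric.ball v r) := Metric.isOpen_ball.measurableSet
  have h0 : Measure.map (gradient φ) (stdGaussian d) (Metric.ball v r) = 0 := by
    rw [Measure.map_apply hT hm]
    have : gradient φ ⁻¹' (Metric.ball v r) = ∅ := by
      ext z
      simp only [Set.mem_preimage, Metric.mem_ball, dist_eq_norm, Set.mem_empty_iff_false, iff_false,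
        not_lt]
      exact hcon z
    rw [this, measure_empty]
  rw [hmap, withDensity_apply_eq_zero (by fun_prop)] at h0
  have h1 : ({x | ENNReal.ofReal (Real.exp (-V x)) ≠ 0} ∩ Metric.ball v r) = Metric.ball v r := by
    apply Set.inter_eq_right.2
    intro z _
    simp [Real.exp_pos]
  rw [h1] at h0
  exact (Metric.measure_ball_pos volume v hr).ne' h0

lemma br_coercive {d : ℕ} (hd : 1 ≤ d) {V φ : EuclideanSpace ℝ (Fin d) → ℝ} (hV : Continuous V)
    (hφ : ContDiff ℝ (⊤ : ℕ∞) φ) (hc : ConvexOn ℝ Set.univ φ)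
    (hmap : Measure.map (gradient φ) (stdGaussian d) =
        (volume.withDensity fun x => ENNReal.ofReal (Real.exp (-V x)))) :
    ∃ a b : ℝ, 0 < a ∧ ∀ x, a * ‖x‖ - b ≤ φ x := by
  have hd' : (1:ℝ) ≤ d := by exact_mod_cast hd
  have hsq : 1 ≤ √(d:ℝ) := Real.one_le_sqrt.2 hd'
  have hsq2 : √(d:ℝ) ^ 2 = d := Real.sq_sqrt (by positivity)
  have hdφ : Differentiable ℝ φ := hφ.differentiable (by simp)
  have hr : 0 < 1 / (2 * √(d:ℝ)) := by positivity
  choose P hP using fun v => br_dense hV hφ hmap v hr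
  let e : Fin d → EuclideanSpace ℝ (Fin d) := fun i => EuclideanSpace.single i 1
  let f : EuclideanSpace ℝ (Fin d) → ℝ := fun v => |φ (P v) - ⟪gradient φ (P v), P v⟫|
  have key : ∀ v x, ⟪v, x⟫ - 1 / (2 * √d) * ‖x‖ - f v ≤ φ x := by
    intro v x
    have h1 := br_convex hdφ hc (P v) x
    rw [inner_sub_right] at h1
    have h2 := neg_le_of_abs_le (abs_real_inner_le_norm (gradient φ (P v) - v) x)
    rw [inner_sub_left] at h2
    have h3 := mul_le_mul_of_nonneg_right (hP v).le (norm_nonneg x)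
    have h4 := neg_abs_le (φ (P v) - ⟪gradient φ (P v), P v⟫)
    simp only [f]
    linarith
  refine ⟨1 / (2 * √d), ∑ i, (f (e i) + f (-e i)), by positivity, fun x => ?_⟩
  have hi : ∃ i, ‖x‖ / √d ≤ |x i| := by
    by_contra hcon
    push Not at hcon
    have h1 : ‖x‖ ^ 2 < ‖x‖ ^ 2 := by
      calc ‖x‖ ^ 2 = ∑ i, x i ^ 2 := EuclideanSpace.real_norm_sq_eq x
        _ < ∑ i : Fin d, (‖x‖ / √d) ^ 2 := by
            apply Finset.sum_lt_sum_of_nonempty ⟨⟨0, hd⟩, Finset.mem_univ _⟩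
            intro i _
            rw [← sq_abs (x i)]
            exact pow_lt_pow_left₀ (hcon i) (abs_nonneg _) two_ne_zero
        _ = ‖x‖ ^ 2 := by
            rw [Finset.sum_const, Finset.card_univ, Fintype.card_fin, nsmul_eq_mul, div_pow, hsq2]
            field_simp
    exact lt_irrefl _ h1
  obtain ⟨i, hi⟩ := hi
  have hf : ∀ v, 0 ≤ f v := fun v => abs_nonneg _
  have hsum : f (e i) + f (-e i) ≤ ∑ i, (f (e i) + f (-e i)) :=
    Finset.single_le_sum (f := fun i => f (e i) + f (-e i))
      (fun j _ => add_nonneg (hf _) (hf _)) (Finset.mem_univ i)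
  have h1 := key (e i) x
  have h2 := key (-e i) x
  have h3 : ⟪e i, x⟫ = x i := by simp [e, EuclideanSpace.inner_single_left]
  rw [inner_neg_left] at h2
  rw [h3] at h1 h2
  have h4 : ‖x‖ / √d = 2 * (1 / (2 * √d) * ‖x‖) := by field_simp
  have h5 := hf (e i)
  have h6 := hf (-e i)
  rcases abs_cases (x i) with h | h <;> linarith

lemma br_V_coercive {d : ℕ} (hd : 1 ≤ d) {V : EuclideanSpace ℝ (Fin d) → ℝ} (hV : Continuous V)
    (hc : ConvexOn ℝ Set.univ V)
    [hμ : IsProbabilityMeasure (volume.withDensity fun x => ENNReal.ofReal (Real.exp (-V x)))]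
    (hiso : IsIsotropic (volume.withDensity fun x => ENNReal.ofReal (Real.exp (-V x)))) :
    ∃ a b : ℝ, 0 < a ∧ ∀ y, a * ‖y‖ - b ≤ V y := by
  have hd' : (1:ℝ) ≤ d := by exact_mod_cast hd
  have hsq : 1 ≤ √(d:ℝ) := Real.one_le_sqrt.2 hd'
  obtain ⟨y₀, hy₀, hdec⟩ := br_decay hd hV hc hiso
  obtain ⟨y₁, hy₁, hmin⟩ := (isCompact_closedBall (0 : EuclideanSpace ℝ (Fin d))
    (10 * (d * √d))).exists_isMinOn ⟨0, by simp; positivity⟩ hV.continuousOn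
  refine ⟨1 / (5 * √d), |V y₀| + |V y₁| + 1 / (5 * √d) * (10 * (d * √d)), by positivity, fun y => ?_⟩
  have h1 := neg_abs_le (V y₀)
  have h2 := neg_abs_le (V y₁)
  have h3 := abs_nonneg (V y₀)
  have h4 := abs_nonneg (V y₁)
  rcases le_total (10 * (d * √d)) ‖y‖ with h | h
  · have h5 := hdec y h
    have h6 : ‖y‖ / (5 * √d) = 1 / (5 * √d) * ‖y‖ := by ring
    have h7 : 0 ≤ 1 / (5 * √d) * (10 * (d * √d)) := by positivity
    linarith
  · have h5 : V y₁ ≤ V y := hmin (by simpa using h)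
    have h6 : 1 / (5 * √d) * ‖y‖ ≤ 1 / (5 * √d) * (10 * (d * √d)) := by gcongr
    linarith

lemma br_snd_loc {G G' : ℝ → ℝ} {g : ℝ} (h1 : ∀ s, HasDerivAt G (G' s) s) (h2 : HasDerivAt G' g 0)
    (hmax : ∀ᶠ s in nhds 0, G s ≤ G 0) : g ≤ 0 := by
  by_contra hg
  push Not at hg
  have hd : deriv G = G' := funext fun s => (h1 s).deriv
  have hG0 : deriv G 0 = 0 := by
    have hm : IsLocalMax G 0 := hmax
    exact hm.deriv_eq_zero
  have hmin := isLocalMin_of_deriv_deriv_pos (f := G) (x₀ := 0) (by rw [hd, h2.deriv]; exact hg) hG0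
    (h1 0).continuousAt
  have hev : G =ᶠ[nhds 0] fun _ => G 0 := by
    filter_upwards [hmin, hmax] with s hs hs2
    exact le_antisymm hs2 hs
  have := hev.deriv.deriv
  have h3 := this.eq_of_nhds
  rw [hd, h2.deriv] at h3
  simp at h3
  linarith

lemma br_trace {d : ℕ} {V φ : EuclideanSpace ℝ (Fin d) → ℝ} (hV : ContDiff ℝ 2 V)
    (hφ : ContDiff ℝ (⊤ : ℕ∞) φ) (hc : ConvexOn ℝ Set.univ φ) {κ : ℝ}
    (hMA : ∀ x, 0 < (fderiv ℝ (gradient φ) x).det ∧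
      Real.log (fderiv ℝ (gradient φ) x).det = κ - ‖x‖ ^ 2 / 2 + V (gradient φ x))
    (x u : EuclideanSpace ℝ (Fin d)) (b : OrthonormalBasis (Fin d) ℝ (EuclideanSpace ℝ (Fin d)))
    (l : Fin d → ℝ) (hl : ∀ i, 0 < l i) (hb : ∀ i, fderiv ℝ (gradient φ) x (b i) = l i • b i)
    (hdet : (fderiv ℝ (gradient φ) x).det = ∏ i, l i) :
    ∑ i, (l i)⁻¹ * ⟪fderiv ℝ (fderiv ℝ (gradient φ)) x u (b i), b i⟫ =
      -⟪x, u⟫ + ⟪gradient V (gradient φ x), fderiv ℝ (gradient φ) x u⟫ := by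
  have h2 : ContDiff ℝ 2 φ := hφ.of_le br_two_le
  have hTd : Differentiable ℝ (gradient φ) := (br_T_contDiff hφ).differentiable (by simp)
  have hHd : Differentiable ℝ (fderiv ℝ (gradient φ)) := (br_H_contDiff hφ).differentiable (by simp)
  have hVd : Differentiable ℝ V := hV.differentiable (by norm_num)
  set g : ℝ → ℝ := fun s => (∑ i, (l i)⁻¹ * ⟪fderiv ℝ (gradient φ) (x + s • u) (b i), b i⟫)
    - (κ - ‖x + s • u‖ ^ 2 / 2 + V (gradient φ (x + s • u))) with hg
  have hpos : ∀ s, g 0 ≤ g s := by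
    have h0 : g 0 = d - Real.log (∏ i, l i) := by
      simp only [hg, zero_smul, add_zero]
      rw [← (hMA x).2, hdet]
      congr 1
      have : ∀ i, (l i)⁻¹ * ⟪fderiv ℝ (gradient φ) x (b i), b i⟫ = 1 := by
        intro i
        rw [hb, real_inner_smul_left, real_inner_self_eq_norm_sq, b.norm_eq_one]
        have := (hl i).ne'
        field_simp
      simp [this]
    intro s
    rw [h0]
    have := br_logdet _ (br_symm h2 (x + s • u)) (br_psd h2 hc (x + s • u)) (hMA (x + s • u)).1 b l hl
    rw [(hMA (x + s • u)).2] at this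
    simp only [hg]
    linarith
  have hderiv : HasDerivAt g ((∑ i, (l i)⁻¹ * ⟪fderiv ℝ (fderiv ℝ (gradient φ)) x u (b i), b i⟫)
    - (-⟪x, u⟫ + ⟪gradient V (gradient φ x), fderiv ℝ (gradient φ) x u⟫)) 0 := by
    have hH := br_line hHd x u 0
    have hT := br_line hTd x u 0
    rw [zero_smul, add_zero] at hH hT
    have hsum : HasDerivAt (fun s : ℝ => ∑ i, (l i)⁻¹ * ⟪fderiv ℝ (gradient φ) (x + s • u) (b i), b i⟫)
        (∑ i, (l i)⁻¹ * ⟪fderiv ℝ (fderiv ℝ (gradient φ)) x u (b i), b i⟫) 0 := by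
      apply HasDerivAt.fun_sum
      intro i _
      apply HasDerivAt.const_mul
      have h3 : HasDerivAt (fun s : ℝ => fderiv ℝ (gradient φ) (x + s • u) (b i))
          (fderiv ℝ (fderiv ℝ (gradient φ)) x u (b i)) 0 := by
        have := hH.clm_apply (hasDerivAt_const (0:ℝ) (b i))
        simpa using this
      have := h3.inner ℝ (hasDerivAt_const (0:ℝ) (b i))
      simpa using this
    have hn : HasDerivAt (fun s : ℝ => ‖x + s • u‖ ^ 2 / 2) ⟪x, u⟫ 0 := by
      have h1 : HasDerivAt (fun s : ℝ => x + s • u) u 0 := by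
        simpa using ((hasDerivAt_id (0:ℝ)).smul_const u).const_add x
      have := h1.norm_sq.div_const 2
      simpa using this
    have hVT : HasDerivAt (fun s : ℝ => V (gradient φ (x + s • u)))
        ⟪gradient V (gradient φ x), fderiv ℝ (gradient φ) x u⟫ 0 := by
      rw [br_inner_T]
      have h1 : HasFDerivAt V (fderiv ℝ V (gradient φ x)) (gradient φ (x + (0:ℝ) • u)) := by
        rw [zero_smul, add_zero]; exact (hVd _).hasFDerivAt
      exact h1.comp_hasDerivAt (0:ℝ) hT
    have := hsum.sub ((hn.const_sub κ).add hVT)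
    exact this
  have hloc : IsLocalMin g 0 := Filter.Eventually.of_forall hpos
  have := hloc.hasDerivAt_eq_zero hderiv
  linarith

/-- Inequality at an interior maximum. -/
lemma br_maxpt {d : ℕ} {V φ : EuclideanSpace ℝ (Fin d) → ℝ} (hV : ContDiff ℝ 2 V)
    (hφ : ContDiff ℝ (⊤ : ℕ∞) φ) (hc : ConvexOn ℝ Set.univ φ) {κ : ℝ}
    (hMA : ∀ x, 0 < (fderiv ℝ (gradient φ) x).det ∧
      Real.log (fderiv ℝ (gradient φ) x).det = κ - ‖x‖ ^ 2 / 2 + V (gradient φ x))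
    (x h : EuclideanSpace ℝ (Fin d)) (α ε β B : ℝ) (ψ w : EuclideanSpace ℝ (Fin d) → ℝ)
    (hψ : ψ = fun z => φ z + β) (hw : w = fun z => ⟪z, gradient φ z⟫ - φ z + B)
    (hmax : ∀ z, φ (z + h) + φ (z - h) - 2 * φ z - (α + ε * ψ z) * w z ≤
      φ (x + h) + φ (x - h) - 2 * φ x - (α + ε * ψ x) * w x) :
    (V (gradient φ (x + h)) - V (gradient φ x)
        - ⟪gradient V (gradient φ x), gradient φ (x + h) - gradient φ x⟫)
      + (V (gradient φ (x - h)) - V (gradient φ x)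
        - ⟪gradient V (gradient φ x), gradient φ (x - h) - gradient φ x⟫)
      ≤ ‖h‖ ^ 2 + (α + ε * ψ x) * (d - ‖x‖ ^ 2)
        + ε * (w x * (d - ⟪gradient V (gradient φ x), gradient φ x⟫)) + 2 * ε * ⟪gradient φ x, x⟫ := by
  have h2 : ContDiff ℝ 2 φ := hφ.of_le br_two_le
  have hφd : Differentiable ℝ φ := h2.differentiable (by norm_num)
  have hTd : Differentiable ℝ (gradient φ) := (br_T_contDiff hφ).differentiable (by simp)
  have hHd : Differentiable ℝ (fderiv ℝ (gradient φ)) := (br_H_contDiff hφ).differentiable (by simp)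
  set T := gradient φ with hT
  set H := fderiv ℝ T with hH
  set K := fderiv ℝ H with hK
  set n := gradient V (T x) with hn
  -- derivatives along lines
  have hlin : ∀ (e : EuclideanSpace ℝ (Fin d)) (s : ℝ), HasDerivAt (fun s : ℝ => x + s • e) e s := by
    intro e s
    simpa using ((hasDerivAt_id s).smul_const e).const_add x
  have hdφ : ∀ e s, HasDerivAt (fun s : ℝ => φ (x + s • e)) ⟪T (x + s • e), e⟫ s :=
    fun e s => br_line_phi hφd x e s
  have hdφp : ∀ e s, HasDerivAt (fun s : ℝ => φ (x + s • e + h)) ⟪T (x + s • e + h), e⟫ s := by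
    intro e s
    have := br_line_phi hφd (x + h) e s
    simpa only [add_right_comm] using this
  have hdφm : ∀ e s, HasDerivAt (fun s : ℝ => φ (x + s • e - h)) ⟪T (x + s • e - h), e⟫ s := by
    intro e s
    have := br_line_phi hφd (x - h) e s
    simpa only [sub_add_eq_add_sub] using this
  have hdT : ∀ e s, HasDerivAt (fun s : ℝ => T (x + s • e)) (H (x + s • e) e) s :=
    fun e s => br_line hTd x e s
  have hdψ : ∀ e s, HasDerivAt (fun s : ℝ => ψ (x + s • e)) ⟪T (x + s • e), e⟫ s := by
    intro e s; rw [hψ]; exact (hdφ e s).add_const β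
  have hdw : ∀ e s, HasDerivAt (fun s : ℝ => w (x + s • e)) ⟪x + s • e, H (x + s • e) e⟫ s := by
    intro e s
    rw [hw]
    have := (((hlin e s).inner ℝ (hdT e s)).sub (hdφ e s)).add_const B
    refine this.congr_deriv ?_
    rw [real_inner_comm e]; ring
  set G : EuclideanSpace ℝ (Fin d) → ℝ → ℝ := fun e s => φ (x + s • e + h) + φ (x + s • e - h)
    - 2 * φ (x + s • e) - (α + ε * ψ (x + s • e)) * w (x + s • e) with hG
  set G' : EuclideanSpace ℝ (Fin d) → ℝ → ℝ := fun e s => ⟪T (x + s • e + h), e⟫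
    + ⟪T (x + s • e - h), e⟫ - 2 * ⟪T (x + s • e), e⟫
    - (ε * ⟪T (x + s • e), e⟫ * w (x + s • e)
      + (α + ε * ψ (x + s • e)) * ⟪x + s • e, H (x + s • e) e⟫) with hG'
  have hdG : ∀ e s, HasDerivAt (G e) (G' e s) s := by
    intro e s
    exact (((hdφp e s).add (hdφm e s)).sub ((hdφ e s).const_mul 2)).sub
      ((((hdψ e s).const_mul ε).const_add α).mul (hdw e s))
  have hGmax : ∀ e s, G e s ≤ G e 0 := by
    intro e s
    simp only [hG, zero_smul, add_zero]
    exact hmax _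
  have hgrad : ∀ e, ⟪T (x + h), e⟫ + ⟪T (x - h), e⟫ - 2 * ⟪T x, e⟫ =
      ε * ⟪T x, e⟫ * w x + (α + ε * ψ x) * ⟪H x x, e⟫ := by
    intro e
    have hloc : IsLocalMax (G e) 0 := Filter.Eventually.of_forall (hGmax e)
    have := hloc.hasDerivAt_eq_zero (hdG e 0)
    simp only [hG', zero_smul, add_zero] at this
    rw [br_symm h2 x x e]
    linarith
  have hsnd : ∀ e, ⟪H (x + h) e, e⟫ + ⟪H (x - h) e, e⟫ - 2 * ⟪H x e, e⟫
      - (ε * ⟪H x e, e⟫ * w x + ε * ⟪T x, e⟫ * ⟪x, H x e⟫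
        + (ε * ⟪T x, e⟫ * ⟪x, H x e⟫ + (α + ε * ψ x) * (⟪H x e, e⟫ + ⟪K x x e, e⟫))) ≤ 0 := by
    intro e
    have hTe := br_line_T h2 x e e 0
    have hTp : HasDerivAt (fun s : ℝ => ⟪T (x + s • e + h), e⟫) ⟪H (x + h) e, e⟫ 0 := by
      have := br_line_T h2 (x + h) e e 0
      simp only [zero_smul, add_zero] at this
      simpa only [add_right_comm] using this
    have hTm : HasDerivAt (fun s : ℝ => ⟪T (x + s • e - h), e⟫) ⟪H (x - h) e, e⟫ 0 := by
      have := br_line_T h2 (x - h) e e 0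
      simp only [zero_smul, add_zero] at this
      simpa only [sub_add_eq_add_sub] using this
    have hHe : HasDerivAt (fun s : ℝ => H (x + s • e) e) (K x e e) 0 := by
      have h3 := br_line hHd x e 0
      rw [zero_smul, add_zero] at h3
      have := h3.clm_apply (hasDerivAt_const (0:ℝ) e)
      simpa using this
    have hxH := (hlin e 0).inner ℝ hHe
    have h3 := ((hTp.add hTm).sub (hTe.const_mul 2)).sub
      (((hTe.const_mul ε).mul (hdw e 0)).add
        ((((hdψ e 0).const_mul ε).const_add α).mul hxH))
    have h4 := br_snd_loc (hdG e) h3 (Filter.Eventually.of_forall (hGmax e))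
    simp only [zero_smul, add_zero] at h4
    have h5 : ⟪x, K x e e⟫ = ⟪K x x e, e⟫ := by
      rw [real_inner_comm, hK, hH, br_K_symm hφ, br_K_symm' hφ]
    have h6 : ⟪e, H x e⟫ = ⟪H x e, e⟫ := real_inner_comm _ _
    rw [h5, h6] at h4
    linarith
  obtain ⟨b, l, hl, hb, hdet⟩ := br_eig (H x) (br_symm h2 x) (br_psd h2 hc x) (hMA x).1.ne'
  have hb' : ∀ i, ⟪H x (b i), b i⟫ = l i := by
    intro i
    rw [hb, real_inner_smul_left, real_inner_self_eq_norm_sq, b.norm_eq_one]; ring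
  have htr := br_trace hV hφ hc hMA x x b l hl hb hdet
  have hTx : ∑ i, ⟪T x, b i⟫ * ⟪x, b i⟫ = ⟪T x, x⟫ := by
    rw [← b.sum_inner_mul_inner (T x) x]
    exact Finset.sum_congr rfl fun i _ => by rw [real_inner_comm x (b i)]
  have hpp := br_logdet _ (br_symm h2 (x + h)) (br_psd h2 hc (x + h)) (hMA (x + h)).1 b l hl
  have hpm := br_logdet _ (br_symm h2 (x - h)) (br_psd h2 hc (x - h)) (hMA (x - h)).1 b l hl
  rw [← hdet, (hMA x).2, (hMA _).2] at hpp hpm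
  set Sp := ∑ i, (l i)⁻¹ * ⟪H (x + h) (b i), b i⟫ with hSp
  set Sm := ∑ i, (l i)⁻¹ * ⟪H (x - h) (b i), b i⟫ with hSm
  have hsum : Sp + Sm - 2 * d - (ε * w x * d + 2 * ε * ⟪T x, x⟫ +
      (α + ε * ψ x) * (d + (-⟪x, x⟫ + ⟪n, H x x⟫))) ≤ 0 := by
    rw [← htr, ← hTx]
    have hcard : (d:ℝ) = ∑ i : Fin d, (1:ℝ) := by simp
    rw [hSp, hSm, hcard]
    simp only [Finset.mul_sum, ← Finset.sum_add_distrib, ← Finset.sum_sub_distrib]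
    apply Finset.sum_nonpos
    intro i _
    have h3 := hsnd (b i)
    rw [hb' i] at h3
    have h4 : ⟪x, H x (b i)⟫ = l i * ⟪x, b i⟫ := by rw [hb, inner_smul_right]
    rw [h4] at h3
    have h5 := mul_nonpos_of_nonneg_of_nonpos (inv_pos.2 (hl i)).le h3
    have h6 : (l i)⁻¹ * l i = 1 := inv_mul_cancel₀ (hl i).ne'
    refine le_trans (le_of_eq ?_) h5
    linear_combination (2 + ε * w x + 2 * ε * ⟪T x, b i⟫ * ⟪x, b i⟫ + (α + ε * ψ x)) * h6
  have hg := hgrad n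
  rw [real_inner_comm n (T (x + h)), real_inner_comm n (T (x - h)), real_inner_comm n (T x),
    real_inner_comm n (H x x)] at hg
  rw [inner_sub_right, inner_sub_right]
  rw [real_inner_self_eq_norm_sq] at hsum
  have hpar : ‖x + h‖ ^ 2 + ‖x - h‖ ^ 2 = 2 * ‖x‖ ^ 2 + 2 * ‖h‖ ^ 2 := by
    have := parallelogram_law_with_norm ℝ x h
    nlinarith
  have hdummy := hg
  nlinarith

lemma br_gain {d : ℕ} {V : EuclideanSpace ℝ (Fin d) → ℝ} {c₂ : ℝ} (hd : 1 ≤ d) (hc2 : 0 < c₂)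
    (hV : ContDiff ℝ 2 V)
    (h : ∀ x v : EuclideanSpace ℝ (Fin d),
        c₂ / (d + ‖x‖) * ‖v‖ ^ 2 ≤ iteratedFDeriv ℝ 2 V x ![v, v])
    (y z : EuclideanSpace ℝ (Fin d)) :
    c₂ * ‖z - y‖ ^ 2 / (2 * (d + ‖y‖ + ‖z - y‖)) ≤ V z - V y - ⟪gradient V y, z - y⟫ := by
  have hd' : (1:ℝ) ≤ d := by exact_mod_cast hd
  have h1 := br_V_lower hV (m := c₂ / (d + ‖y‖ + ‖z - y‖) * ‖z - y‖ ^ 2) y (z - y) fun s hs => by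
    refine le_trans ?_ (h _ _)
    apply mul_le_mul_of_nonneg_right _ (sq_nonneg _)
    apply div_le_div_of_nonneg_left hc2.le (by positivity)
    have h2 := norm_add_le y (s • (z - y))
    rw [norm_smul, Real.norm_of_nonneg hs.1] at h2
    have h3 := mul_le_mul_of_nonneg_right hs.2 (norm_nonneg (z - y))
    linarith
  rw [add_sub_cancel] at h1
  have h2 : c₂ * ‖z - y‖ ^ 2 / (2 * (d + ‖y‖ + ‖z - y‖)) =
      c₂ / (d + ‖y‖ + ‖z - y‖) * ‖z - y‖ ^ 2 / 2 := by
    have : 0 < d + ‖y‖ + ‖z - y‖ := by positivity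
    field_simp
  rw [h2]; linarith

lemma br_delta_le {d : ℕ} {φ : EuclideanSpace ℝ (Fin d) → ℝ} (hd : Differentiable ℝ φ)
    (hc : ConvexOn ℝ Set.univ φ) (x h : EuclideanSpace ℝ (Fin d)) :
    φ (x + h) + φ (x - h) - 2 * φ x ≤ ⟪gradient φ (x + h) - gradient φ (x - h), h⟫ := by
  have h1 := br_convex hd hc (x + h) x
  have h2 := br_convex hd hc (x - h) x
  have h3 : x - (x + h) = -h := by abel
  have h4 : x - (x - h) = h := by abel
  rw [h3, inner_neg_right] at h1
  rw [h4] at h2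
  rw [inner_sub_left]
  linarith

lemma br_opnorm {d : ℕ} (A : EuclideanSpace ℝ (Fin d) →L[ℝ] EuclideanSpace ℝ (Fin d))
    (hs : ∀ v w, ⟪A v, w⟫ = ⟪v, A w⟫) (hp : ∀ v, 0 ≤ ⟪A v, v⟫) (hd : A.det ≠ 0) {c : ℝ} (hc : 0 ≤ c)
    (h : ∀ v, ⟪A v, v⟫ ≤ c * ‖v‖ ^ 2) : ‖A‖ ≤ c := by
  obtain ⟨b, l, hl, hb, -⟩ := br_eig A hs hp hd
  have hlc : ∀ i, l i ≤ c := by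
    intro i
    have := h (b i)
    rw [hb, real_inner_smul_left, real_inner_self_eq_norm_sq, b.norm_eq_one] at this
    linarith
  refine ContinuousLinearMap.opNorm_le_bound _ hc fun v => ?_
  have h1 : ∀ u, ‖u‖ ^ 2 = ∑ i, ⟪b i, u⟫ ^ 2 := by
    intro u
    rw [← real_inner_self_eq_norm_sq, ← b.sum_inner_mul_inner u u]
    exact Finset.sum_congr rfl fun i _ => by rw [real_inner_comm]; ring
  have h2 : ‖A v‖ ^ 2 ≤ (c * ‖v‖) ^ 2 := by
    rw [mul_pow, h1 (A v), h1 v, Finset.mul_sum]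
    refine Finset.sum_le_sum fun i _ => ?_
    rw [← hs, hb, real_inner_smul_left, mul_pow]
    exact mul_le_mul_of_nonneg_right (pow_le_pow_left₀ (hl i).le (hlc i) 2) (sq_nonneg _)
  exact (pow_le_pow_iff_left₀ (norm_nonneg _) (by positivity) two_ne_zero).1 h2

lemma br_hess_le {d : ℕ} {φ : EuclideanSpace ℝ (Fin d) → ℝ} (hφ : ContDiff ℝ 2 φ)
    (x v : EuclideanSpace ℝ (Fin d)) {m r : ℝ} (hr : 0 < r)
    (h : ∀ u : EuclideanSpace ℝ (Fin d), u ≠ 0 → ‖u‖ ≤ r →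
      φ (x + u) + φ (x - u) - 2 * φ x ≤ m * ‖u‖ ^ 2) :
    ⟪fderiv ℝ (gradient φ) x v, v⟫ ≤ m * ‖v‖ ^ 2 := by
  have hφd : Differentiable ℝ φ := hφ.differentiable (by norm_num)
  set G : ℝ → ℝ := fun s => φ (x + s • v) + φ (x + s • (-v)) - m * ‖v‖ ^ 2 * s ^ 2 with hG
  set G' : ℝ → ℝ := fun s => ⟪gradient φ (x + s • v), v⟫ + ⟪gradient φ (x + s • (-v)), -v⟫
    - m * ‖v‖ ^ 2 * (2 * s) with hG'
  have h1 : ∀ s, HasDerivAt G (G' s) s := by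
    intro s
    have h3 := (hasDerivAt_pow 2 s).const_mul (m * ‖v‖ ^ 2)
    have := ((br_line_phi hφd x v s).add (br_line_phi hφd x (-v) s)).sub h3
    refine this.congr_deriv ?_
    simp [hG']
  have h2 := ((br_line_T hφ x v v 0).add (br_line_T hφ x (-v) (-v) 0)).sub
    (((hasDerivAt_id (0:ℝ)).const_mul 2).const_mul (m * ‖v‖ ^ 2))
  have hev : ∀ᶠ s in nhds (0:ℝ), G s ≤ G 0 := by
    have hcont : Filter.Tendsto (fun s : ℝ => ‖s • v‖) (nhds 0) (nhds 0) := by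
      have : Continuous (fun s : ℝ => ‖s • v‖) := by fun_prop
      simpa using this.tendsto 0
    filter_upwards [hcont.eventually (ge_mem_nhds hr)] with s hs
    simp only [hG, zero_smul, add_zero]
    by_cases h0 : s • v = 0
    · have h4 : m * ‖v‖ ^ 2 * s ^ 2 = m * ‖s • v‖ ^ 2 := by
        rw [norm_smul, mul_pow, Real.norm_eq_abs, sq_abs]; ring
      rw [h4, smul_neg, h0]; simp
    · have h3 := h (s • v) h0 hs
      rw [norm_smul, mul_pow, Real.norm_eq_abs, sq_abs] at h3
      rw [smul_neg, ← sub_eq_add_neg]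
      linarith
  have h3 := br_snd_loc h1 h2 hev
  simp only [zero_smul, add_zero, map_neg, inner_neg_neg] at h3
  linarith

/-- Existence of a maximum from decay at infinity. -/
lemma br_exists_max {d : ℕ} {F : EuclideanSpace ℝ (Fin d) → ℝ} (hF : Continuous F) {R : ℝ}
    (h : ∀ x, R ≤ ‖x‖ → F x ≤ F 0) : ∃ x, ∀ z, F z ≤ F x := by
  obtain ⟨x, hx, hmax⟩ := (isCompact_closedBall (0 : EuclideanSpace ℝ (Fin d)) |R|).exists_isMaxOn
    ⟨0, by simp⟩ hF.continuousOn
  refine ⟨x, fun z => ?_⟩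
  rcases le_total ‖z‖ |R| with hz | hz
  · exact hmax (by simpa using hz)
  · exact (h z ((le_abs_self R).trans hz)).trans (hmax (by simp))

lemma br_bdd {d : ℕ} {F : EuclideanSpace ℝ (Fin d) → ℝ} (hF : Continuous F) {R : ℝ}
    (h : ∀ x, R ≤ ‖x‖ → F x ≤ 0) : ∃ C, 0 ≤ C ∧ ∀ z, F z ≤ C := by
  obtain ⟨x, hx, hmax⟩ := (isCompact_closedBall (0 : EuclideanSpace ℝ (Fin d)) |R|).exists_isMaxOn
    ⟨0, by simp⟩ hF.continuousOn
  refine ⟨|F x|, abs_nonneg _, fun z => ?_⟩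
  rcases le_total ‖z‖ |R| with hz | hz
  · have : F z ≤ F x := hmax (by simpa using hz)
    exact this.trans (le_abs_self _)
  · exact (h z ((le_abs_self R).trans hz)).trans (abs_nonneg _)

/-- Growth of the Legendre-type function. -/
lemma br_w_lower {d : ℕ} {φ : EuclideanSpace ℝ (Fin d) → ℝ} (hd : Differentiable ℝ φ)
    (hc : ConvexOn ℝ Set.univ φ) {R M : ℝ} (hR : 0 ≤ R) (hM : ∀ z, ‖z‖ ≤ R → φ z ≤ M)
    (x : EuclideanSpace ℝ (Fin d)) : R * ‖gradient φ x‖ - M ≤ ⟪x, gradient φ x⟫ - φ x := by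
  by_cases h0 : gradient φ x = 0
  · have h1 := br_convex hd hc x 0
    rw [h0] at h1 ⊢
    have := hM 0 (by simpa using hR)
    simp at h1 ⊢
    linarith
  have hp : 0 < ‖gradient φ x‖ := norm_pos_iff.2 h0
  set z := (R / ‖gradient φ x‖) • gradient φ x with hz
  have hn : ‖z‖ = R := by
    rw [hz, norm_smul, Real.norm_of_nonneg (by positivity)]; field_simp
  have h1 := br_convex hd hc x z
  have h2 := hM z hn.le
  have h3 : ⟪gradient φ x, z⟫ = R * ‖gradient φ x‖ := by
    rw [hz, inner_smul_right, real_inner_self_eq_norm_sq]; field_simp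
  rw [inner_sub_right, h3, real_inner_comm] at h1
  linarith

lemma br_ball_max {d : ℕ} {φ : EuclideanSpace ℝ (Fin d) → ℝ} (hd : Continuous φ) {R : ℝ} (hR : 0 ≤ R) :
    ∃ z, ‖z‖ ≤ R ∧ ∀ y, ‖y‖ ≤ R → φ y ≤ φ z := by
  obtain ⟨x, hx, hmax⟩ := (isCompact_closedBall (0 : EuclideanSpace ℝ (Fin d)) R).exists_isMaxOn
    ⟨0, by simpa using hR⟩ hd.continuousOn
  exact ⟨x, by simpa using hx, fun y hy => hmax (by simpa using hy)⟩

/-- Numerical lower bound for the gain. -/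
lemma br_gain_num {c₂ A D q w d s g : ℝ} (hc2 : 0 < c₂) (hA : 0 < A) (hD : 0 < D) (hs : 0 < s)
    (_hd : 1 ≤ d) (hw1 : 1 ≤ w) (hwD : d ^ 2 * D ≤ w ^ 2)
    (hq : A * s * w / 2 ≤ q) (hg : c₂ * q ^ 2 / (2 * (D + q)) ≤ g)
    (hA2 : 32 * (1 + A * d) ≤ A ^ 2 * c₂ * d ^ 2) (hs2 : s * (16 * (1 + A * d)) ≤ c₂ * A) :
    2 * (1 + A * d) * s ^ 2 ≤ g := by
  set q0 := A * s * w / 2 with hq0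
  have hq0pos : 0 < q0 := by positivity
  have hqpos : 0 < q := lt_of_lt_of_le hq0pos hq
  rw [div_le_iff₀ (by positivity)] at hg
  have hmono : c₂ * q0 ^ 2 ≤ g * (2 * (D + q0)) := by
    have h1 : q0 ^ 2 * (D + q) ≤ q ^ 2 * (D + q0) := by
      nlinarith [mul_nonneg (sub_nonneg.2 hq) hD.le, mul_pos hq0pos hqpos,
        mul_nonneg (mul_pos hq0pos hqpos).le (sub_nonneg.2 hq), mul_nonneg (mul_nonneg (sub_nonneg.2 hq) hD.le) (add_pos hq0pos hqpos).le]
    have h2 : c₂ * q0 ^ 2 * (D + q) ≤ g * (2 * (D + q0)) * (D + q) := by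
      calc c₂ * q0 ^ 2 * (D + q) = c₂ * (q0 ^ 2 * (D + q)) := by ring
        _ ≤ c₂ * (q ^ 2 * (D + q0)) := by gcongr
        _ = c₂ * q ^ 2 * (D + q0) := by ring
        _ ≤ g * (2 * (D + q)) * (D + q0) := by gcongr
        _ = _ := by ring
    exact le_of_mul_le_mul_right h2 (by positivity)
  have hgpos : 0 < g := by
    have : 0 < g * (2 * (D + q0)) := lt_of_lt_of_le (by positivity) hmono
    exact pos_of_mul_pos_left this (by positivity)
  rcases le_total q0 D with h | h
  · have h1 : c₂ * q0 ^ 2 ≤ g * (4 * D) := hmono.trans (by nlinarith)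
    have h2 : c₂ * (A ^ 2 * s ^ 2 * (d ^ 2 * D)) / 4 ≤ g * (4 * D) := by
      refine le_trans ?_ h1
      have : c₂ * (A ^ 2 * s ^ 2 * (d ^ 2 * D)) ≤ c₂ * (A ^ 2 * s ^ 2 * w ^ 2) := by gcongr
      rw [hq0]; nlinarith
    have h3 : (2 * (1 + A * d) * s ^ 2) * (4 * D) ≤ g * (4 * D) := by
      refine le_trans ?_ h2
      have : 32 * (1 + A * d) * (s ^ 2 * D) ≤ A ^ 2 * c₂ * d ^ 2 * (s ^ 2 * D) := by gcongr
      nlinarith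
    exact le_of_mul_le_mul_right h3 (by positivity)
  · have h1 : c₂ * q0 ^ 2 ≤ g * (4 * q0) := hmono.trans (by nlinarith)
    have h2 : c₂ * q0 ≤ 4 * g := by
      have : (c₂ * q0) * q0 ≤ (4 * g) * q0 := by nlinarith
      exact le_of_mul_le_mul_right this hq0pos
    have h3 : c₂ * A * s ≤ c₂ * A * s * w := by
      have : 0 < c₂ * A * s := by positivity
      nlinarith
    have h4 : s * (16 * (1 + A * d)) * s ≤ c₂ * A * s := by gcongr
    rw [hq0] at h2
    nlinarith

set_option maxHeartbeats 1000000 in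
lemma br_main {d : ℕ} (hd : 1 ≤ d) {V φ : EuclideanSpace ℝ (Fin d) → ℝ} (hV : ContDiff ℝ 2 V)
    (hφ : ContDiff ℝ (⊤ : ℕ∞) φ) (hc : ConvexOn ℝ Set.univ φ) {κ : ℝ}
    (hMA : ∀ x, 0 < (fderiv ℝ (gradient φ) x).det ∧
      Real.log (fderiv ℝ (gradient φ) x).det = κ - ‖x‖ ^ 2 / 2 + V (gradient φ x))
    {c₂ : ℝ} (hc2 : 0 < c₂)
    (hlow : ∀ x v : EuclideanSpace ℝ (Fin d),
        c₂ / (d + ‖x‖) * ‖v‖ ^ 2 ≤ iteratedFDeriv ℝ 2 V x ![v, v])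
    (hVc : ConvexOn ℝ Set.univ V)
    {N C a β a' b' : ℝ} (hN : 0 ≤ N) (hgr : ∀ x, ‖gradient φ x‖ ≤ N * (d + ‖x‖ ^ 2))
    (hC : 0 < C) (hlg : ∀ x, ‖x‖ ≤ C * (1 + ‖gradient φ x‖))
    (ha : 0 < a) (hco : ∀ x, a * ‖x‖ - β ≤ φ x)
    (ha' : 0 < a') (hVco : ∀ y, a' * ‖y‖ - b' ≤ V y)
    {M B A : ℝ} (hM : ∀ z, ‖z‖ ≤ 1 → φ z ≤ M) (hB : B = M + d ^ 2)
    (hA : 0 < A) (hA2 : 32 * (1 + A * d) ≤ A ^ 2 * c₂ * d ^ 2)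
    (x₀ h : EuclideanSpace ℝ (Fin d)) (hh : h ≠ 0) (hh2 : ‖h‖ * (16 * (1 + A * d)) ≤ c₂ * A) :
    φ (x₀ + h) + φ (x₀ - h) - 2 * φ x₀ ≤
      A * ‖h‖ ^ 2 * (⟪x₀, gradient φ x₀⟫ - φ x₀ + B) := by
  have hd' : (1:ℝ) ≤ d := by exact_mod_cast hd
  have h2 : ContDiff ℝ 2 φ := hφ.of_le br_two_le
  have hφd : Differentiable ℝ φ := h2.differentiable (by norm_num)
  have hVd : Differentiable ℝ V := hV.differentiable (by norm_num)
  have hTc : Continuous (gradient φ) := (br_T_contDiff hφ).continuous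
  have hgV : Continuous (gradient V) := by
    have h3 : ContDiff ℝ 1 (fderiv ℝ V) := hV.fderiv_right (by norm_num)
    exact (InnerProductSpace.toDual ℝ _).symm.continuous.comp h3.continuous
  have hφc : Continuous φ := hφd.continuous
  have hs : 0 < ‖h‖ := norm_pos_iff.2 hh
  set T := gradient φ with hT
  set w : EuclideanSpace ℝ (Fin d) → ℝ := fun z => ⟪z, T z⟫ - φ z + B with hw
  set ψ : EuclideanSpace ℝ (Fin d) → ℝ := fun z => φ z + β with hψ
  have hwc : Continuous w := by fun_prop
  have hψc : Continuous ψ := by fun_prop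
  have hψa : ∀ z, a * ‖z‖ ≤ ψ z := fun z => by have := hco z; simp only [hψ]; linarith
  have hψ0 : ∀ z, 0 ≤ ψ z := fun z => le_trans (by positivity) (hψa z)
  have hwT : ∀ z, ‖T z‖ + d ^ 2 ≤ w z := fun z => by
    have := br_w_lower hφd hc zero_le_one hM z
    simp only [hw, hB]; linarith
  have hw1 : ∀ z, 1 ≤ w z := fun z => by
    have := hwT z
    have := norm_nonneg (T z)
    nlinarith
  have hwD : ∀ z, (d:ℝ) ^ 2 * (d + ‖T z‖) ≤ w z ^ 2 := fun z => by
    have h3 := hwT z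
    have h4 := norm_nonneg (T z)
    have h5 : (d:ℝ) ^ 2 ≤ w z := by linarith
    have h6 : (d:ℝ) + ‖T z‖ ≤ w z := by nlinarith
    calc (d:ℝ) ^ 2 * (d + ‖T z‖) ≤ w z * w z := by gcongr; exact le_trans zero_le_one (hw1 z)
      _ = w z ^ 2 := by ring
  have hxT : ∀ z, ⟪T z, z⟫ ≤ ψ z + w z := fun z => by
    have h3 := hψ0 0
    have h4 := hM 0 (by simp)
    simp only [hψ] at h3
    have h5 : (0:ℝ) ≤ (d:ℝ) ^ 2 := by positivity
    rw [real_inner_comm]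
    simp only [hψ, hw, hB]
    linarith
  -- bound on the error bracket
  obtain ⟨C0, hC0, hbr⟩ : ∃ C0, 0 ≤ C0 ∧ ∀ z, ψ z * (d + 2 - ‖z‖ ^ 2) +
      w z * (d + 2 - ⟪gradient V (T z), T z⟫) ≤ C0 := by
    refine br_bdd (R := (d + 2) + C * (1 + |b' + V 0 + d + 2| / a')) (by fun_prop) ?_
    intro z hz
    have hpos1 : 0 ≤ C * (1 + |b' + V 0 + d + 2| / a') := by positivity
    have h3 : ψ z * (d + 2 - ‖z‖ ^ 2) ≤ 0 := by
      apply mul_nonpos_of_nonneg_of_nonpos (hψ0 z)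
      have : (d:ℝ) + 2 ≤ ‖z‖ := by linarith
      nlinarith
    have h4 : w z * (d + 2 - ⟪gradient V (T z), T z⟫) ≤ 0 := by
      apply mul_nonpos_of_nonneg_of_nonpos (le_trans zero_le_one (hw1 z))
      have h5 := br_convex hVd hVc (T z) 0
      rw [zero_sub, inner_neg_right] at h5
      have h6 := hVco (T z)
      have h7 := hlg z
      have h8 : |b' + V 0 + d + 2| / a' ≤ ‖T z‖ := by
        have h9 : C * (1 + |b' + V 0 + d + 2| / a') ≤ C * (1 + ‖T z‖) := by linarith
        have := le_of_mul_le_mul_left h9 hC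
        linarith
      rw [div_le_iff₀ ha'] at h8
      have h9 := le_abs_self (b' + V 0 + d + 2)
      linarith
    linarith
  -- the perturbed inequality
  have key : ∀ ε, 0 < ε → ε * C0 < ‖h‖ ^ 2 → ∀ z,
      φ (z + h) + φ (z - h) - 2 * φ z - (A * ‖h‖ ^ 2 + ε * ψ z) * w z ≤ 0 := by
    intro ε hε hεC
    obtain ⟨x, hx⟩ : ∃ x, ∀ z, φ (z + h) + φ (z - h) - 2 * φ z - (A * ‖h‖ ^ 2 + ε * ψ z) * w z ≤
        φ (x + h) + φ (x - h) - 2 * φ x - (A * ‖h‖ ^ 2 + ε * ψ x) * w x := by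
      set F : EuclideanSpace ℝ (Fin d) → ℝ := fun z =>
        φ (z + h) + φ (z - h) - 2 * φ z - (A * ‖h‖ ^ 2 + ε * ψ z) * w z with hF
      have hFc : Continuous F := by fun_prop
      set P1 := 4 * N * ‖h‖ with hP1
      set P0 := 2 * N * ‖h‖ * (d + 2 * ‖h‖ ^ 2) with hP0
      have hdel : ∀ z, φ (z + h) + φ (z - h) - 2 * φ z ≤ P0 + P1 * ‖z‖ ^ 2 := by
        intro z
        have h3 := br_delta_le hφd hc z h
        have h4 := real_inner_le_norm (T (z + h) - T (z - h)) h
        have h5 := norm_sub_le (T (z + h)) (T (z - h))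
        have h6 := hgr (z + h)
        have h7 := hgr (z - h)
        have h8 : ‖z + h‖ ^ 2 + ‖z - h‖ ^ 2 = 2 * ‖z‖ ^ 2 + 2 * ‖h‖ ^ 2 := by
          have := parallelogram_law_with_norm ℝ z h
          nlinarith
        have h9 : ‖T (z + h) - T (z - h)‖ ≤ N * (2 * d + 2 * ‖z‖ ^ 2 + 2 * ‖h‖ ^ 2) := by
          calc _ ≤ N * (d + ‖z + h‖ ^ 2) + N * (d + ‖z - h‖ ^ 2) := by linarith
            _ = N * (2 * d + (‖z + h‖ ^ 2 + ‖z - h‖ ^ 2)) := by ring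
            _ = _ := by rw [h8]; ring
        have h10 := mul_le_mul_of_nonneg_right h9 hs.le
        have h11 : 0 ≤ N * ‖h‖ * ‖z‖ ^ 2 := by positivity
        have h12 : 0 ≤ N * ‖h‖ * ‖h‖ ^ 2 := by positivity
        rw [hP0, hP1]
        nlinarith
      have hP1pos : 0 ≤ P1 := by positivity
      set R := (P1 + 1) * C / (ε * a) with hR
      have hRpos : 0 ≤ R := by positivity
      obtain ⟨zR, -, hzR⟩ := br_ball_max hφc hRpos
      have hwR : ∀ z, R * ‖z‖ / C - |R + φ zR - B| ≤ w z := by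
        intro z
        have h3 := br_w_lower hφd hc hRpos hzR z
        have h4 := hlg z
        have h5 : ‖z‖ / C ≤ 1 + ‖T z‖ := by rw [div_le_iff₀ hC]; linarith
        have h6 := mul_le_mul_of_nonneg_left h5 hRpos
        have h7 := le_abs_self (R + φ zR - B)
        have h8 : R * ‖z‖ / C = R * (‖z‖ / C) := by ring
        rw [h8]
        simp only [hw]
        linarith
      set Q := ε * a * |R + φ zR - B| with hQ
      have hQpos : 0 ≤ Q := by positivity
      have hFb : ∀ z, F z ≤ P0 + Q * ‖z‖ - ‖z‖ ^ 2 := by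
        intro z
        have h3 : 0 ≤ A * ‖h‖ ^ 2 * w z := mul_nonneg (by positivity) (le_trans zero_le_one (hw1 z))
        have h4 : ε * (a * ‖z‖) * w z ≤ ε * ψ z * w z := by
          apply mul_le_mul_of_nonneg_right _ (le_trans zero_le_one (hw1 z))
          exact mul_le_mul_of_nonneg_left (hψa z) hε.le
        have h5 : ε * (a * ‖z‖) * (R * ‖z‖ / C - |R + φ zR - B|) ≤ ε * (a * ‖z‖) * w z :=
          mul_le_mul_of_nonneg_left (hwR z) (by positivity)
        have h6 : ε * (a * ‖z‖) * (R * ‖z‖ / C - |R + φ zR - B|) =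
            (P1 + 1) * ‖z‖ ^ 2 - Q * ‖z‖ := by
          have hRe : ε * a * (R / C) = P1 + 1 := by rw [hR]; field_simp
          rw [hQ]
          linear_combination ‖z‖ ^ 2 * hRe
        have h7 := hdel z
        simp only [hF]
        linarith
      refine br_exists_max hFc (R := Q + 1 + |P0| + |F 0|) fun z hz => ?_
      refine (hFb z).trans ?_
      have h3 := le_abs_self P0
      have h4 := neg_abs_le (F 0)
      have h5 := abs_nonneg P0
      have h6 := abs_nonneg (F 0)
      nlinarith
    intro z
    refine (hx z).trans ?_
    by_contra hcon
    push Not at hcon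
    have hmp := br_maxpt hV hφ hc hMA x h (A * ‖h‖ ^ 2) ε β B ψ w hψ hw hx
    have hg1 := br_gain hd hc2 hV hlow (T x) (T (x + h))
    have hg2 := br_gain hd hc2 hV hlow (T x) (T (x - h))
    have hg1n : 0 ≤ c₂ * ‖T (x + h) - T x‖ ^ 2 / (2 * (d + ‖T x‖ + ‖T (x + h) - T x‖)) := by positivity
    have hg2n : 0 ≤ c₂ * ‖T (x - h) - T x‖ ^ 2 / (2 * (d + ‖T x‖ + ‖T (x - h) - T x‖)) := by positivity
    set g := (V (T (x + h)) - V (T x) - ⟪gradient V (T x), T (x + h) - T x⟫)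
      + (V (T (x - h)) - V (T x) - ⟪gradient V (T x), T (x - h) - T x⟫) with hgdef
    have hq : ∃ q, A * ‖h‖ * w x / 2 ≤ q ∧ c₂ * q ^ 2 / (2 * (d + ‖T x‖ + q)) ≤ g := by
      have h3 := br_delta_le hφd hc x h
      have h4 : ⟪T (x + h) - T (x - h), h⟫ ≤ (‖T (x + h) - T x‖ + ‖T (x - h) - T x‖) * ‖h‖ := by
        refine (real_inner_le_norm _ _).trans ?_
        apply mul_le_mul_of_nonneg_right _ hs.le
        have := norm_sub_le (T (x + h) - T x) (T (x - h) - T x)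
        rwa [sub_sub_sub_cancel_right] at this
      have h5 : 0 ≤ ε * ψ x * w x := mul_nonneg (mul_nonneg hε.le (hψ0 x)) (le_trans zero_le_one (hw1 x))
      have h6 : (A * ‖h‖ * w x) * ‖h‖ ≤ (‖T (x + h) - T x‖ + ‖T (x - h) - T x‖) * ‖h‖ := by
        nlinarith
      have h7 := le_of_mul_le_mul_right h6 hs
      rcases le_total ‖T (x + h) - T x‖ ‖T (x - h) - T x‖ with h8 | h8
      · exact ⟨‖T (x - h) - T x‖, by linarith, by linarith⟩
      · exact ⟨‖T (x + h) - T x‖, by linarith, by linarith⟩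
    obtain ⟨q, hq1, hq2⟩ := hq
    have hfin := br_gain_num hc2 hA (by positivity) hs hd' (hw1 x) (hwD x) hq1 hq2 hA2 hh2
    have hb := hbr x
    have hxTx := hxT x
    have h3 : ε * (ψ x * (d - ‖x‖ ^ 2) + w x * (d - ⟪gradient V (T x), T x⟫) + 2 * ⟪T x, x⟫) ≤ ε * C0 := by
      apply mul_le_mul_of_nonneg_left _ hε.le
      linarith
    have h4 : 0 ≤ A * ‖h‖ ^ 2 * ‖x‖ ^ 2 := by positivity
    have h5 : 0 ≤ A * d * ‖h‖ ^ 2 := by positivity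
    nlinarith
  by_contra hcon
  push Not at hcon
  set t := φ (x₀ + h) + φ (x₀ - h) - 2 * φ x₀ - A * ‖h‖ ^ 2 * w x₀ with ht
  have htpos : 0 < t := by simp only [ht, hw]; linarith
  have hpw : 0 ≤ ψ x₀ * w x₀ := mul_nonneg (hψ0 x₀) (le_trans zero_le_one (hw1 x₀))
  set ε := min (‖h‖ ^ 2 / (C0 + 1)) (t / (ψ x₀ * w x₀ + 1)) / 2 with hε
  have hεpos : 0 < ε := by
    apply half_pos
    apply lt_min <;> positivity
  have h3 : ε * 2 ≤ ‖h‖ ^ 2 / (C0 + 1) := by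
    rw [hε, div_mul_cancel₀ _ two_ne_zero]; exact min_le_left _ _
  have h4 : ε * 2 ≤ t / (ψ x₀ * w x₀ + 1) := by
    rw [hε, div_mul_cancel₀ _ two_ne_zero]; exact min_le_right _ _
  rw [le_div_iff₀ (by positivity)] at h3 h4
  have h5 := key ε hεpos (by nlinarith) x₀
  nlinarith

lemma br_w_num {d r s g gz e : ℝ} (hd : 1 ≤ d) (hr : 0 ≤ r) (hs : 1 ≤ s) (hs2 : s ^ 2 = d)
    (hg : g ≤ 1200 * s * (d + r ^ 2)) (hgz : gz ≤ 2400 * (s * d)) (he : e ≤ r + 1) (he0 : 0 ≤ e) :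
    r * g + gz * e + d ^ 2 ≤ 6001 * (d + r ^ 2) ^ 2 := by
  have h10 : gz * e ≤ 2400 * (s * d) * (r + 1) :=
    mul_le_mul hgz he he0 (by positivity)
  have h11 : r * g ≤ r * (1200 * s * (d + r ^ 2)) := mul_le_mul_of_nonneg_left hg hr
  have hr2 : 0 ≤ r ^ 2 := sq_nonneg r
  have hxd : r * s ≤ d + r ^ 2 := by nlinarith [sq_nonneg (r - s)]
  have hsd0 : s ≤ d := by nlinarith
  generalize hS : d + r ^ 2 = S at *
  have hdS : d ≤ S := by linarith
  have hSpos : 0 < S := by linarith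
  have e1 : r * (1200 * s * S) ≤ 1200 * S ^ 2 := by nlinarith
  have e2 : 2400 * (s * d) * (r + 1) ≤ 4800 * S ^ 2 := by
    have e3 : s * r + s ≤ 2 * S := by linarith
    have e4 : d * (s * r + s) ≤ S * (2 * S) :=
      mul_le_mul hdS e3 (by positivity) hSpos.le
    linarith
  have e5 : d ^ 2 ≤ S ^ 2 := pow_le_pow_left₀ (by positivity) hdS 2
  linarith

lemma br_k_num {m c₁ c₂ : ℝ} (hm1 : 1 ≤ m) (hc1 : 1 ≤ c₁) (hc2 : 0 < c₂)
    (h3 : (64 * 6001 ^ 2) ^ 2 * c₁ ^ 2 / c₂ ^ 2 ≤ m) :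
    64 ≤ m / 6001 * c₂ ∧ 64 ≤ (m / 6001) ^ 2 * c₂ := by
  have hmc : (64 * 6001 ^ 2) ^ 2 ≤ m * c₂ ^ 2 := by
    rw [div_le_iff₀ (by positivity)] at h3
    refine le_trans ?_ h3
    have : 1 ≤ c₁ ^ 2 := one_le_pow₀ hc1
    nlinarith
  have hmm : (64 * 6001 ^ 2) ≤ m * c₂ := by
    have h3 : (64 * 6001 ^ 2 : ℝ) ^ 2 ≤ (m * c₂) ^ 2 := by
      refine hmc.trans ?_
      rw [mul_pow]
      apply mul_le_mul_of_nonneg_right _ (sq_nonneg _)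
      nlinarith
    exact (pow_le_pow_iff_left₀ (by norm_num) (by positivity) two_ne_zero).1 h3
  have hmm2 : (64 * 6001 ^ 2) ≤ m ^ 2 * c₂ := by
    have : m * c₂ ≤ m * (m * c₂) := by
      have : 0 < m * c₂ := by positivity
      nlinarith
    nlinarith
  constructor
  · rw [div_mul_eq_mul_div, le_div_iff₀ (by norm_num)]; linarith
  · rw [div_pow, div_mul_eq_mul_div, le_div_iff₀ (by norm_num)]; linarith

/-- L^∞ estimate on `∇T`: there is a universal constant `C > 0` such that if `T = ∇φ`
(with `φ` smooth and convex) sends the standard Gaussian onto `μ = e^{-V} dx`, `μ` is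
centered and isotropic, and `c₁ Id ≥ Hess V(x) ≥ (c₂/(d + |x|)) Id` with `c₁ ≥ 1`,
`c₂ > 0`, then `‖∇T(x)‖_op ≤ max(C c₁²/c₂², 1) (d + |x|²)²` for every `x`. -/
theorem statement_5 :
    ∃ C : ℝ, 0 < C ∧ ∀ (d : ℕ) (V φ : EuclideanSpace ℝ (Fin d) → ℝ) (c₁ c₂ : ℝ),
      1 ≤ c₁ → 0 < c₂ →
      ContDiff ℝ 2 V → ContDiff ℝ (⊤ : ℕ∞) φ → ConvexOn ℝ Set.univ φ →
      IsProbabilityMeasure (volume.withDensity fun x => ENNReal.ofReal (Real.exp (-V x))) →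
      IsCentered (volume.withDensity fun x => ENNReal.ofReal (Real.exp (-V x))) →
      IsIsotropic (volume.withDensity fun x => ENNReal.ofReal (Real.exp (-V x))) →
      Measure.map (gradient φ) (stdGaussian d) =
        (volume.withDensity fun x => ENNReal.ofReal (Real.exp (-V x))) →
      (∀ x v : EuclideanSpace ℝ (Fin d),
        iteratedFDeriv ℝ 2 V x ![v, v] ≤ c₁ * ‖v‖ ^ 2) →
      (∀ x v : EuclideanSpace ℝ (Fin d),
        c₂ / (d + ‖x‖) * ‖v‖ ^ 2 ≤ iteratedFDeriv ℝ 2 V x ![v, v]) →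
      ∀ x : EuclideanSpace ℝ (Fin d),
        ‖fderiv ℝ (gradient φ) x‖ ≤ max (C * c₁ ^ 2 / c₂ ^ 2) 1 * (d + ‖x‖ ^ 2) ^ 2 := by
  refine ⟨(64 * 6001 ^ 2) ^ 2, by norm_num, ?_⟩
  intro d V φ c₁ c₂ hc1 hc2 hV hφ hc hprob _ hiso hmap hup hlow x
  set m := max ((64 * 6001 ^ 2) ^ 2 * c₁ ^ 2 / c₂ ^ 2) 1 with hm
  have hm1 : 1 ≤ m := le_max_right _ _
  rcases Nat.eq_zero_or_pos d with hd0 | hd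
  · subst hd0
    have : fderiv ℝ (gradient φ) x = 0 := Subsingleton.elim _ _
    rw [this, norm_zero]; positivity
  have hd' : (1:ℝ) ≤ d := by exact_mod_cast hd
  have hsq : 1 ≤ √(d:ℝ) := Real.one_le_sqrt.2 hd'
  have hsq2 : √(d:ℝ) ^ 2 = d := Real.sq_sqrt (by positivity)
  have h2 : ContDiff ℝ 2 φ := hφ.of_le br_two_le
  have hφd : Differentiable ℝ φ := h2.differentiable (by norm_num)
  have hVcont : Continuous V := hV.continuous
  have hVc : ConvexOn ℝ Set.univ V := br_V_convex hV fun y v =>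
    le_trans (by positivity) (hlow y v)
  obtain ⟨κ, hMA⟩ := br_MAlog hVcont hφ hc hmap
  have hgr := br_growth hd hVcont hVc hφ hc hiso hmap
  obtain ⟨C, hC, hlg⟩ := br_lower_growth (lt_of_lt_of_le one_pos hc1) hV hφ hc hmap hup
  obtain ⟨a, β, ha, hco⟩ := br_coercive hd hVcont hφ hc hmap
  obtain ⟨a', b', ha', hVco⟩ := br_V_coercive hd hVcont hVc hiso
  obtain ⟨z, hz1, hzM⟩ := br_ball_max hφd.continuous zero_le_one
  -- constants
  set k := m / 6001 with hk
  have hkpos : 0 < k := by positivity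
  have hkc : 64 ≤ k * c₂ ∧ 64 ≤ k ^ 2 * c₂ := br_k_num hm1 hc1 hc2 (le_max_left _ _)
  set A := k / d with hA
  have hApos : 0 < A := by positivity
  have hAd : A * d = k := by rw [hA]; field_simp
  have hA2 : 32 * (1 + A * d) ≤ A ^ 2 * c₂ * d ^ 2 := by
    have h3 : A ^ 2 * c₂ * d ^ 2 = (A * d) ^ 2 * c₂ := by ring
    rw [h3, hAd]
    nlinarith [hkc.1, hkc.2]
  set w := ⟪x, gradient φ x⟫ - φ x + (φ z + d ^ 2) with hw
  have hwl : 0 ≤ w := by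
    have := br_w_lower hφd hc zero_le_one hzM x
    have h3 := norm_nonneg (gradient φ x)
    have h4 : (0:ℝ) ≤ (d:ℝ) ^ 2 := by positivity
    rw [hw]; linarith
  have hwu : w ≤ 6001 * (d + ‖x‖ ^ 2) ^ 2 := by
    have h3 := br_convex hφd hc z x
    have h4 := hgr x
    have h5 := hgr z
    have h6 := real_inner_le_norm x (gradient φ x)
    have h7 := neg_le_of_abs_le (abs_real_inner_le_norm (gradient φ z) (x - z))
    have h8 : ‖x - z‖ ≤ ‖x‖ + 1 := (norm_sub_le _ _).trans (by linarith)
    have h9 : ‖gradient φ z‖ ≤ 2400 * (√d * d) := by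
      have : ‖z‖ ^ 2 ≤ 1 := pow_le_one₀ (norm_nonneg _) hz1
      refine h5.trans ?_
      nlinarith
    have h12 := br_w_num hd' (norm_nonneg x) hsq hsq2 h4 h9 h8 (norm_nonneg _)
    rw [hw]
    linarith
  have hH : ∀ v, ⟪fderiv ℝ (gradient φ) x v, v⟫ ≤ A * w * ‖v‖ ^ 2 := by
    intro v
    refine br_hess_le h2 x v (r := c₂ * A / (16 * (1 + A * d))) (by positivity) fun u hu hur => ?_
    rw [le_div_iff₀ (by positivity)] at hur
    have := br_main hd hV hφ hc hMA hc2 hlow hVc (N := 1200 * √d) (by positivity) hgr hC hlg ha hco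
      ha' hVco hzM rfl hApos hA2 x u hu hur
    rw [hw]
    linarith
  have hnorm := br_opnorm _ (br_symm h2 x) (br_psd h2 hc x) (hMA x).1.ne' (c := A * w)
    (by positivity) hH
  refine hnorm.trans ?_
  have hAk : A ≤ k := by
    rw [hA]; exact div_le_self hkpos.le hd'
  calc A * w ≤ k * (6001 * (d + ‖x‖ ^ 2) ^ 2) := by gcongr
    _ = m * (d + ‖x‖ ^ 2) ^ 2 := by rw [hk]; ring
end
end
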